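/- arXiv:2211.14776 — 10 statements merged into one kernel-verified Lean document; each statement's English description precedes it below -/
import Mathlib

section
/- Let A be a nontrivial bi-Gödel algebra (a bi-Heyting algebra with ⊥ ≠ ⊤ satisfying (a ⇨ b) ⊔ (b ⊨> a) = ⊤ for all a, b, where ⇨ is the Heyting implication) in which ⊥ is meet-irreducible (a ⊓ b = ⊥ implies a = ⊥ or b = ⊥). For a, b in A set s(a,b) := ¬((a \ b) ⊔ (b \ a)). Then s(a,b) = ⊤ when a = b and s(a,b) = ⊥ when a ≠ b; consequently the term t(a,b,c) := (s(a,b) ⊓ c) ⊔ (¬s(a,b) ⊓ a) satisfies t(a,b,c) = c when a = b and t(a,b,c) = a when a ≠ b (i.e. t is a discriminator term on A). -/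
/-!
Put `d = (a \ b) ⊔ (b \ a)`. By co-residuation `d = ⊥` exactly when `a ≤ b` and `b ≤ a`, that is,
when `a = b`; in that case `dᶜ = ⊤`. If `a ≠ b`, then `d ≠ ⊥`, and since `d ⊓ dᶜ = ⊥` the
meet-irreducibility of `⊥` forces `dᶜ = ⊥`. The discriminator identities follow by substituting
these two values.
-/

/-- Let `A` be a nontrivial bi-Gödel algebra (a bi-Heyting algebra with
`⊥ ≠ ⊤` validating `(a ⇨ b) ⊔ (b ⇨ a) = ⊤`) in which `⊥` is meet-irreducible.  Setting
`s a b := ((a \ b) ⊔ (b \ a))ᶜ`, we have `s a b = ⊤` when `a = b` and `s a b = ⊥` when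
`a ≠ b`; consequently `t a b c := (s a b ⊓ c) ⊔ ((s a b)ᶜ ⊓ a)` is a discriminator term:
`t a b c = c` when `a = b` and `t a b c = a` when `a ≠ b`. -/
theorem biGodel_discriminator
    {A : Type*} [BiheytingAlgebra A]
    (hnt : (⊥ : A) ≠ ⊤)
    (hGD : ∀ a b : A, (a ⇨ b) ⊔ (b ⇨ a) = ⊤)
    (hirr : ∀ a b : A, a ⊓ b = ⊥ → a = ⊥ ∨ b = ⊥)
    (a b c : A) :
    (a = b → ((a \ b) ⊔ (b \ a))ᶜ = ⊤) ∧
    (a ≠ b → ((a \ b) ⊔ (b \ a))ᶜ = ⊥) ∧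
    (a = b → ((((a \ b) ⊔ (b \ a))ᶜ ⊓ c) ⊔ ((((a \ b) ⊔ (b \ a))ᶜ)ᶜ ⊓ a)) = c) ∧
    (a ≠ b → ((((a \ b) ⊔ (b \ a))ᶜ ⊓ c) ⊔ ((((a \ b) ⊔ (b \ a))ᶜ)ᶜ ⊓ a)) = a) := by
  have heq : a = b → ((a \ b) ⊔ (b \ a))ᶜ = ⊤ := by
    rintro rfl
    simp
  have hne : a ≠ b → ((a \ b) ⊔ (b \ a))ᶜ = ⊥ := by
    intro hab
    -- `d ⊓ dᶜ = ⊥` for `d = (a \ b) ⊔ (b \ a)`, and `d = ⊥` would force `a = b`.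
    refine (hirr _ _ (inf_compl_self ((a \ b) ⊔ (b \ a)))).resolve_left fun h => hab ?_
    rw [sup_eq_bot_iff, sdiff_eq_bot_iff, sdiff_eq_bot_iff] at h
    exact le_antisymm h.1 h.2
  refine ⟨heq, hne, fun h => ?_, fun h => ?_⟩
  · simp [heq h]
  · simp [hne h]
end

section
/- Let F and G be co-trees and f : F → G a bi-p-morphism. If x, y ∈ F and y is an immediate successor of x (i.e. x is covered by y), then either f(x) = f(y) or f(y) is an immediate successor of f(x) (f(x) is covered by f(y)). -/
/-! An element `u` strictly between `f x` and `f y` lifts, by the up condition, to some `z ≥ x` with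
`f z = u`. As the upset of `x` is a chain, `z` and `y` are comparable: `y ≤ z` would give
`f y ≤ u`, while `x ≤ z ≤ y` forces `z = x` or `z = y` because `y` covers `x`. -/

/-- Let `F` and `G` be co-trees (partial orders with a greatest element whose
principal upsets are chains) and `f : F → G` a bi-p-morphism.  If `y` is an immediate successor
of `x` (i.e. `x ⋖ y`), then either `f x = f y` or `f y` is an immediate successor of `f x`. -/
theorem biPMorphism_covBy
    {F G : Type*} [PartialOrder F] [OrderTop F] [PartialOrder G] [OrderTop G]
    (hF : ∀ x : F, IsChain (· ≤ ·) (Set.Ici x))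
    (hG : ∀ x : G, IsChain (· ≤ ·) (Set.Ici x))
    (f : F → G)
    (hmono : Monotone f)
    (hup : ∀ x : F, ∀ u : G, f x ≤ u → ∃ y : F, x ≤ y ∧ f y = u)
    (hdown : ∀ x : F, ∀ v : G, v ≤ f x → ∃ z : F, z ≤ x ∧ f z = v)
    {x y : F} (hxy : x ⋖ y) :
    f x = f y ∨ f x ⋖ f y := by
  rcases (hmono hxy.le).eq_or_lt with h | h
  · exact Or.inl h
  refine Or.inr ⟨h, ?_⟩
  intro u hxu huy
  obtain ⟨z, hxz, rfl⟩ := hup x u hxu.le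
  rcases (hF x).total hxz hxy.le with hzy | hyz
  · rcases hxy.eq_or_eq hxz hzy with rfl | rfl
    · exact hxu.false
    · exact huy.false
  · exact huy.not_ge (hmono hyz)
end

section
/- For n ≥ 1 let T_n be the finite co-tree defined as follows: its elements are d, c, b, a together with, for each i ∈ {1, …, n}, elements w_i, u_i, z_i, v_i, s_i, t_i, p_i, q_i; the order is generated by d < c < b < a < w_n, by w_i < u_i for each i, by u_{i+1} < w_i for 1 ≤ i < n (so that a < w_n < u_n < w_{n-1} < u_{n-1} < … < w_1 < u_1, and u_1 is the co-root), by s_i < t_i < z_i < w_i for each i, and by p_i < v_i, q_i < v_i, v_i < u_i for each i (with p_i and q_i incomparable). Let T_0 be the four-element chain d < c < b < a. Then the family {T_n : n ∈ ℕ} is an antichain with respect to bi-p-morphic images: for all m ≠ n there is no surjective bi-p-morphism from T_n onto T_m. -/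
/-!
Let `f : T n → T m` be a surjective bi-p-morphism.  Counting elements (`4 + 8 n` against
`4 + 8 m`) gives `m ≤ n`, so it remains to exclude `m < n`.  Two facts restrict `f`:

* if `y` is the immediate successor of `x`, then `f x` is either equal to `f y` or immediately
  below `f y` (`up_cover`);
* chains below `f x` lift to chains below `x` (`lift_lt`), so `f` does not increase height.  In
  particular `f (v i)` has height at most `1` and `f (z i)` has height at most `2`, whereas every
  spine point and `a` have larger height.

Going down the spine, these force `f` to be the identity on `u i`, `v i`, `w i`, `z i` for
`i < m`: `v i` cannot be sent to a spine point because of its height, `z i` cannot be sent to `v i`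
because the downset of `z i` is a chain, and a spine point cannot be sent to a side point, for then
the bottom element `d` would have no preimage.  One step further, at `i = m < n`, the point `u m`
is sent to `a`, so that `v m` is sent to `a` or `b`, both of height at least `2`: a contradiction.
-/

/-- The elements of the co-tree `T n` (`n` arbitrary; for `n = 0` only the chain
`d < c < b < a` remains).  For `i : Fin n`, the constructor index `i` stands for the
subscript `i + 1` of the paper, so that `u ⟨0,_⟩` is the co-root `u_1`.
Constructors: `d c b a` form the bottom chain; `w i` and `u i` are the spine points;
`z i` is the side point below `w i` with the two-element chain `s i < t i` below it;
`v i` is the side point below `u i` with the two incomparable minimal points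
`p i`, `q i` below it. -/
inductive TElem (n : ℕ) : Type where
  | d | c | b | a
  | w (i : Fin n) | u (i : Fin n) | z (i : Fin n) | v (i : Fin n)
  | s (i : Fin n) | t (i : Fin n) | p (i : Fin n) | q (i : Fin n)

namespace TElem

variable {n : ℕ}

/-- `strictAbove x y` holds iff `y` lies strictly above `x` in the order of `T n`
generated by `d < c < b < a < w_n`, `w_i < u_i`, `u_{i+1} < w_i`, `s_i < t_i < z_i < w_i`,
`p_i < v_i`, `q_i < v_i`, `v_i < u_i` (written here in paper subscripts; recall that
the `Fin n` index is the paper subscript minus one, so smaller index = higher). -/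
def strictAbove : TElem n → TElem n → Prop
  | .d, .c => True
  | .d, .b => True
  | .d, .a => True
  | .d, .w _ => True
  | .d, .u _ => True
  | .c, .b => True
  | .c, .a => True
  | .c, .w _ => True
  | .c, .u _ => True
  | .b, .a => True
  | .b, .w _ => True
  | .b, .u _ => True
  | .a, .w _ => True
  | .a, .u _ => True
  | .w i, .u j => j ≤ i
  | .w i, .w j => j < i
  | .u i, .u j => j < i
  | .u i, .w j => j < i
  | .z i, .w j => j ≤ i
  | .z i, .u j => j ≤ i
  | .t i, .z j => j = i
  | .t i, .w j => j ≤ i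
  | .t i, .u j => j ≤ i
  | .s i, .t j => j = i
  | .s i, .z j => j = i
  | .s i, .w j => j ≤ i
  | .s i, .u j => j ≤ i
  | .v i, .u j => j ≤ i
  | .v i, .w j => j < i
  | .p i, .v j => j = i
  | .p i, .u j => j ≤ i
  | .p i, .w j => j < i
  | .q i, .v j => j = i
  | .q i, .u j => j ≤ i
  | .q i, .w j => j < i
  | _, _ => False

/-- A rank function strictly decreasing along `strictAbove` (higher points have
smaller rank); used only to establish antisymmetry of the order. -/
def rk : TElem n → ℕ
  | .u i => 2 * i.val
  | .w i => 2 * i.val + 1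
  | .v i => 2 * i.val + 1
  | .z i => 2 * i.val + 2
  | .p i => 2 * i.val + 2
  | .q i => 2 * i.val + 2
  | .t i => 2 * i.val + 3
  | .s i => 2 * i.val + 4
  | .a => 2 * n
  | .b => 2 * n + 1
  | .c => 2 * n + 2
  | .d => 2 * n + 3

set_option maxHeartbeats 1000000 in
theorem rk_strictAbove : ∀ x y : TElem n, strictAbove x y → rk y < rk x := by
  intro x y h
  cases x <;> cases y <;>
    simp only [strictAbove, Fin.lt_def, Fin.le_def, Fin.ext_iff] at h <;>
    simp only [rk] <;>
    omega

/-- The (reflexive) upset of an element of `T n`. -/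
def upset (x : TElem n) : Set (TElem n) := {y | y = x ∨ strictAbove x y}

/-- The order of `T n`: `x ≤ y` iff the upset of `y` is contained in the upset of `x`,
i.e. iff `y = x` or `y` lies strictly above `x`. -/
instance : PartialOrder (TElem n) where
  le x y := upset y ⊆ upset x
  le_refl _ := subset_rfl
  le_trans _ _ _ hxy hyz := Set.Subset.trans hyz hxy
  le_antisymm x y hxy hyx := by
    have hy : y ∈ upset x := hxy (Or.inl rfl)
    have hx : x ∈ upset y := hyx (Or.inl rfl)
    rcases hy with hy | hy
    · exact hy.symm
    · rcases hx with hx | hx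
      · exact hx
      · have h1 := rk_strictAbove x y hy
        have h2 := rk_strictAbove y x hx
        omega

end TElem

/-! ### The order of `T n` -/

namespace TElem

variable {n m : ℕ}

set_option maxHeartbeats 4000000 in
theorem strictAbove_trans {x y z : TElem n} (h : strictAbove x y) (h' : strictAbove y z) :
    strictAbove x z := by
  cases x <;> cases y <;> simp only [strictAbove] at h <;> cases z <;>
    simp only [strictAbove, Fin.lt_def, Fin.le_def, Fin.ext_iff] at h h' ⊢ <;> omega

theorem le_iff {x y : TElem n} : x ≤ y ↔ y = x ∨ strictAbove x y := by
  constructor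
  · intro h
    exact h (Or.inl rfl)
  · rintro (rfl | h)
    · exact le_refl _
    · rintro z (rfl | hz)
      · exact Or.inr h
      · exact Or.inr (strictAbove_trans h hz)

theorem lt_iff {x y : TElem n} : x < y ↔ strictAbove x y := by
  rw [lt_iff_le_and_ne, le_iff]
  constructor
  · rintro ⟨rfl | h, h'⟩
    · exact absurd rfl h'
    · exact h
  · intro h
    refine ⟨Or.inr h, ?_⟩
    rintro rfl
    exact lt_irrefl _ (rk_strictAbove _ _ h)

/-- The spine point of `T n` at level `i`: the point `u i` when `i < n`, and `a`, which lies
immediately below the last `w`, otherwise. -/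
def nxt (n i : ℕ) : TElem n := if h : i < n then u ⟨i, h⟩ else a

/-- The spine point at level `0` is the greatest element. -/
theorem le_top (x : TElem n) : x ≤ nxt n 0 := by
  unfold nxt
  split_ifs with h0
  · cases x <;> simp [le_iff, strictAbove, Fin.lt_def, Fin.ext_iff, -Fin.val_fin_lt]
    all_goals first | exact Nat.zero_le _ | exact (Nat.eq_zero_or_pos _).imp Eq.symm id
  · cases x <;> first | (simp [le_iff, strictAbove]; done) | exact absurd (Fin.pos ‹_›) h0

theorem le_u {x : TElem n} {i : Fin n} (h : x ≤ u i) : x = u i ∨ x ≤ w i ∨ x ≤ v i := by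
  cases x <;>
    simp [le_iff, strictAbove, Fin.lt_def, Fin.le_def, Fin.ext_iff, -Fin.val_fin_le,
      -Fin.val_fin_lt] at h ⊢ <;>
    omega

theorem le_w {x : TElem n} {i : Fin n} (h : x ≤ w i) :
    x = w i ∨ x ≤ z i ∨ x ≤ nxt n (i + 1) := by
  unfold nxt
  split_ifs <;>
  cases x <;>
    simp [le_iff, strictAbove, Fin.lt_def, Fin.le_def, Fin.ext_iff, -Fin.val_fin_le,
      -Fin.val_fin_lt] at h ⊢ <;>
    omega

theorem le_a {x : TElem n} (h : x ≤ a) : x = a ∨ x ≤ b := by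
  cases x <;> simp [le_iff, strictAbove] at h ⊢

theorem cover_w {x : TElem n} {i : Fin n} (h : w i ≤ x) : x = w i ∨ u i ≤ x := by
  cases x <;>
    simp [le_iff, strictAbove, Fin.lt_def, Fin.le_def, Fin.ext_iff, -Fin.val_fin_le,
      -Fin.val_fin_lt] at h ⊢ <;>
    omega

theorem cover_v {x : TElem n} {i : Fin n} (h : v i ≤ x) : x = v i ∨ u i ≤ x := by
  cases x <;>
    simp [le_iff, strictAbove, Fin.lt_def, Fin.le_def, Fin.ext_iff, -Fin.val_fin_le,
      -Fin.val_fin_lt] at h ⊢ <;>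
    omega

theorem cover_z {x : TElem n} {i : Fin n} (h : z i ≤ x) : x = z i ∨ w i ≤ x := by
  cases x <;>
    simp [le_iff, strictAbove, Fin.lt_def, Fin.le_def, Fin.ext_iff, -Fin.val_fin_le,
      -Fin.val_fin_lt] at h ⊢ <;>
    omega

theorem cover_u {x : TElem n} {i : ℕ} {h1 : i + 1 < n} {h0 : i < n} (h : u ⟨i + 1, h1⟩ ≤ x) :
    x = u ⟨i + 1, h1⟩ ∨ w ⟨i, h0⟩ ≤ x := by
  cases x <;>
    simp [le_iff, strictAbove, Fin.lt_def, Fin.le_def, Fin.ext_iff, -Fin.val_fin_le,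
      -Fin.val_fin_lt] at h ⊢ <;>
    omega

theorem height_v {x y : TElem n} {i : Fin n} (h : x < y) (h' : y < v i) : False := by
  cases y <;> simp [lt_iff, strictAbove] at h' <;> cases x <;> simp [lt_iff, strictAbove] at h

theorem height_z {x y k : TElem n} {i : Fin n} (h : x < y) (h' : y < k) (h'' : k < z i) :
    False := by
  cases k <;> simp [lt_iff, strictAbove] at h'' <;> cases y <;>
    simp [lt_iff, strictAbove] at h' <;> cases x <;> simp [lt_iff, strictAbove] at h

theorem chain_z {x y : TElem n} {i : Fin n} (h : x ≤ z i) (h' : y ≤ z i) : x ≤ y ∨ y ≤ x := by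
  cases x <;> simp [le_iff, strictAbove] at h <;> cases y <;> simp [le_iff, strictAbove] at h' <;>
    simp_all [le_iff, strictAbove]

/-! ### Cardinality -/

/-- The decomposition of `T n` into its bottom chain and `n` blocks of eight elements. -/
def equivSum (n : ℕ) : TElem n ≃ Fin 4 ⊕ Fin 8 × Fin n where
  toFun
    | d => .inl 0 | c => .inl 1 | b => .inl 2 | a => .inl 3
    | w i => .inr (0, i) | u i => .inr (1, i) | z i => .inr (2, i) | v i => .inr (3, i)
    | s i => .inr (4, i) | t i => .inr (5, i) | p i => .inr (6, i) | q i => .inr (7, i)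
  invFun
    | .inl 0 => d | .inl 1 => c | .inl 2 => b | .inl 3 => a
    | .inr (0, i) => w i | .inr (1, i) => u i | .inr (2, i) => z i | .inr (3, i) => v i
    | .inr (4, i) => s i | .inr (5, i) => t i | .inr (6, i) => p i | .inr (7, i) => q i
  left_inv x := by cases x <;> rfl
  right_inv x := by
    rcases x with x | ⟨x, i⟩ <;> fin_cases x <;> rfl

theorem card_le {f : TElem n → TElem m} (hf : Function.Surjective f) : m ≤ n := by
  have : Finite (TElem n) := Finite.of_equiv _ (equivSum n).symm
  have h := Nat.card_le_card_of_surjective f hf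
  rw [Nat.card_congr (equivSum n), Nat.card_congr (equivSum m)] at h
  simp at h
  omega

/-! ### Bi-p-morphisms -/

section Morphism

variable {f : TElem n → TElem m}

/-- If the only points above `x` are `x` itself and the points above `y`, then the same holds for
`f x` and `f y`. -/
theorem up_cover (mono : Monotone f) (up : ∀ x u, f x ≤ u → ∃ y, x ≤ y ∧ f y = u)
    {x y : TElem n} (hc : ∀ {k}, x ≤ k → k = x ∨ y ≤ k) {k : TElem m} (hk : f x ≤ k) :
    k = f x ∨ f y ≤ k := by
  obtain ⟨k', h, rfl⟩ := up x k hk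
  rcases hc h with rfl | h
  · exact Or.inl rfl
  · exact Or.inr (mono h)

theorem lift_lt (down : ∀ x v, v ≤ f x → ∃ z, z ≤ x ∧ f z = v) {x : TElem n} {y : TElem m}
    (h : y < f x) : ∃ k, k < x ∧ f k = y := by
  obtain ⟨k, hk, rfl⟩ := down x y h.le
  refine ⟨k, lt_of_le_of_ne hk ?_, rfl⟩
  rintro rfl
  exact lt_irrefl _ h

theorem no_height_v (down : ∀ x v, v ≤ f x → ∃ z, z ≤ x ∧ f z = v) {i : Fin n} {x y : TElem m}
    (h : x < y) (h' : y < f (v i)) : False := by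
  obtain ⟨k, hk, rfl⟩ := lift_lt down h'
  obtain ⟨l, hl, rfl⟩ := lift_lt down h
  exact height_v hl hk

theorem no_height_z (down : ∀ x v, v ≤ f x → ∃ z, z ≤ x ∧ f z = v) {i : Fin n}
    {x y k : TElem m} (h : x < y) (h' : y < k) (h'' : k < f (z i)) : False := by
  obtain ⟨k, hk, rfl⟩ := lift_lt down h''
  obtain ⟨l, hl, rfl⟩ := lift_lt down h'
  obtain ⟨o, ho, rfl⟩ := lift_lt down h
  exact height_z ho hl hk

theorem z_ne_v (mono : Monotone f) (down : ∀ x v, v ≤ f x → ∃ z, z ≤ x ∧ f z = v) {i : Fin n}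
    {j : Fin m} (h : f (z i) = v j) : False := by
  obtain ⟨x, hx, hx'⟩ := down (z i) (p j) (by rw [h]; simp [le_iff, strictAbove])
  obtain ⟨y, hy, hy'⟩ := down (z i) (q j) (by rw [h]; simp [le_iff, strictAbove])
  rcases chain_z hx hy with h | h <;> have := mono h <;> rw [hx', hy'] at this <;>
    simp [le_iff, strictAbove] at this

/-- A point whose immediate successor is sent to `u j` is sent to `u j`, `w j` or `v j`. -/
theorem cases_u (mono : Monotone f) (up : ∀ x u, f x ≤ u → ∃ y, x ≤ y ∧ f y = u)
    {x y : TElem n} (hxy : x ≤ y) (hc : ∀ {k}, x ≤ k → k = x ∨ y ≤ k) {j : Fin m}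
    (h : f y = u j) : f x = u j ∨ f x = w j ∨ f x = v j := by
  have h1 := mono hxy
  rw [h] at h1
  rcases le_u h1 with h2 | h2 | h2
  · exact Or.inl h2
  · rcases up_cover mono up hc h2 with h3 | h3
    · exact Or.inr (Or.inl h3.symm)
    · rw [h] at h3
      simp [le_iff, strictAbove] at h3
  · rcases up_cover mono up hc h2 with h3 | h3
    · exact Or.inr (Or.inr h3.symm)
    · rw [h] at h3
      simp [le_iff, strictAbove] at h3

/-- A point whose immediate successor is sent to `w j` is sent to `w j`, to `z j` or to the spine
point below `w j`. -/
theorem cases_w (mono : Monotone f) (up : ∀ x u, f x ≤ u → ∃ y, x ≤ y ∧ f y = u)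
    {x y : TElem n} (hxy : x ≤ y) (hc : ∀ {k}, x ≤ k → k = x ∨ y ≤ k) {j : Fin m}
    (h : f y = w j) : f x = w j ∨ f x = z j ∨ f x = nxt m (j + 1) := by
  have h1 := mono hxy
  rw [h] at h1
  rcases le_w h1 with h2 | h2 | h2
  · exact Or.inl h2
  · rcases up_cover mono up hc h2 with h3 | h3
    · exact Or.inr (Or.inl h3.symm)
    · rw [h] at h3
      simp [le_iff, strictAbove] at h3
  · rcases up_cover mono up hc h2 with h3 | h3
    · exact Or.inr (Or.inr h3.symm)
    · rw [h] at h3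
      unfold nxt at h3
      split_ifs at h3 <;>
      simp [le_iff, strictAbove, Fin.le_def, -Fin.val_fin_le, -Fin.val_fin_lt] at h3

theorem cb {m : ℕ} : (c : TElem m) < b := by simp [lt_iff, strictAbove]
theorem dc {m : ℕ} : (d : TElem m) < c := by simp [lt_iff, strictAbove]
theorem b_lt_u {j : Fin m} : b < u j := by simp [lt_iff, strictAbove]
theorem b_lt_w {j : Fin m} : b < w j := by simp [lt_iff, strictAbove]
theorem b_lt_nxt {j : ℕ} : b < nxt m j := by
  unfold nxt; split_ifs <;> simp [lt_iff, strictAbove]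

/-- Along the spine, `f (u i)` is the point of `T m` at the same level, and `d` is attained only
below `u i`. -/
theorem spine (mono : Monotone f) (up : ∀ x u, f x ≤ u → ∃ y, x ≤ y ∧ f y = u)
    (down : ∀ x v, v ≤ f x → ∃ z, z ≤ x ∧ f z = v) (surj : Function.Surjective f) :
    ∀ (i : ℕ) (hi : i < n), i ≤ m →
      f (u ⟨i, hi⟩) = nxt m i ∧ ∀ x, f x = d → x ≤ u ⟨i, hi⟩ := by
  intro i
  induction i with
  | zero =>
    intro hi _
    have hn : nxt n 0 = u ⟨0, hi⟩ := by rw [nxt, dif_pos hi]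
    have top : ∀ x : TElem n, x ≤ u ⟨0, hi⟩ := fun x => hn ▸ le_top x
    refine ⟨?_, fun x _ => top x⟩
    -- The image of the co-root is the greatest element, by surjectivity.
    obtain ⟨x, hx⟩ := surj (nxt m 0)
    exact le_antisymm (le_top _) (hx ▸ mono (top x))
  | succ i ih =>
    intro hi1 him
    have hi : i < n := by omega
    have hm : i < m := by omega
    obtain ⟨hu, hd⟩ := ih hi hm.le
    rw [nxt, dif_pos hm] at hu
    have hv : f (v ⟨i, hi⟩) = v ⟨i, hm⟩ := by
      rcases cases_u mono up (x := v ⟨i, hi⟩) (y := u ⟨i, hi⟩)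
        (by simp [le_iff, strictAbove]) cover_v hu with h | h | h
      · exact (no_height_v down cb (h ▸ b_lt_u)).elim
      · exact (no_height_v down cb (h ▸ b_lt_w)).elim
      · exact h
    have hdw : ∀ x, f x = d → x ≤ w ⟨i, hi⟩ := by
      intro x hx
      rcases le_u (hd x hx) with rfl | h | h
      · rw [hx] at hu; cases hu
      · exact h
      · have := mono h
        rw [hx, hv] at this
        simp [le_iff, strictAbove] at this
    obtain ⟨x0, hx0⟩ := surj d
    have hzw : (z ⟨i, hi⟩ : TElem n) ≤ w ⟨i, hi⟩ := by simp [le_iff, strictAbove]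
    have hw : f (w ⟨i, hi⟩) = w ⟨i, hm⟩ := by
      rcases cases_u mono up (x := w ⟨i, hi⟩) (y := u ⟨i, hi⟩)
        (by simp [le_iff, strictAbove]) cover_w hu with h | h | h
      · rcases cases_u mono up hzw cover_z h with h | h | h
        · exact (no_height_z down dc cb (h ▸ b_lt_u)).elim
        · exact (no_height_z down dc cb (h ▸ b_lt_w)).elim
        · exact (z_ne_v mono down h).elim
      · exact h
      · have := mono (hdw x0 hx0)
        rw [hx0, h] at this
        simp [le_iff, strictAbove] at this
    have hz : f (z ⟨i, hi⟩) = z ⟨i, hm⟩ := by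
      rcases cases_w mono up hzw cover_z hw with h | h | h
      · exact (no_height_z down dc cb (h ▸ b_lt_w)).elim
      · exact h
      · exact (no_height_z down dc cb (h ▸ b_lt_nxt)).elim
    have hdu : ∀ x, f x = d → x ≤ u ⟨i + 1, hi1⟩ := by
      intro x hx
      rcases le_w (hdw x hx) with rfl | h | h
      · rw [hx] at hw; cases hw
      · have := mono h
        rw [hx, hz] at this
        simp [le_iff, strictAbove] at this
      · simpa only [nxt, dif_pos hi1] using h
    refine ⟨?_, hdu⟩
    rcases cases_w mono up (x := u ⟨i + 1, hi1⟩) (y := w ⟨i, hi⟩)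
      (by simp [le_iff, strictAbove, Fin.lt_def, -Fin.val_fin_le, -Fin.val_fin_lt])
      cover_u hw with h | h | h
    · rcases cases_w mono up (x := v ⟨i + 1, hi1⟩) (y := u ⟨i + 1, hi1⟩)
        (by simp [le_iff, strictAbove]) cover_v h with h | h | h
      · exact (no_height_v down cb (h ▸ b_lt_w)).elim
      · exact (no_height_v down (x := s ⟨i, hm⟩) (y := t ⟨i, hm⟩)
          (by simp [lt_iff, strictAbove]) (by rw [h]; simp [lt_iff, strictAbove])).elim
      · exact (no_height_v down cb (h ▸ b_lt_nxt)).elim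
    · have := mono (hdu x0 hx0)
      rw [hx0, h] at this
      simp [le_iff, strictAbove] at this
    · exact h

end Morphism

end TElem

/-- The family `{T n : n ∈ ℕ}` of finite co-trees is an antichain with
respect to bi-p-morphic images: for `m ≠ n` there is no surjective bi-p-morphism
(monotone map satisfying the up and down conditions) from `T n` onto `T m`. -/
theorem hodkinson_antichain :
    ∀ m n : ℕ, m ≠ n →
      ¬ ∃ f : TElem n → TElem m,
          Monotone f ∧
          (∀ x u, f x ≤ u → ∃ y, x ≤ y ∧ f y = u) ∧
          (∀ x v, v ≤ f x → ∃ z, z ≤ x ∧ f z = v) ∧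
          Function.Surjective f := by
  rintro m n hmn ⟨f, mono, up, down, surj⟩
  open TElem in
  have hlt : m < n := lt_of_le_of_ne (card_le surj) hmn
  have hu := (spine mono up down surj m hlt le_rfl).1
  rw [nxt, dif_neg (lt_irrefl m)] at hu
  have hvu : (v ⟨m, hlt⟩ : TElem n) ≤ u ⟨m, hlt⟩ := by simp [le_iff, strictAbove]
  have h1 := mono hvu
  rw [hu] at h1
  rcases le_a h1 with h | h
  · exact no_height_v down cb (i := ⟨m, hlt⟩) (by rw [h]; simp [lt_iff, strictAbove])
  · rcases up_cover mono up cover_v h with h | h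
    · exact no_height_v down dc (i := ⟨m, hlt⟩) (h ▸ cb)
    · rw [hu] at h
      simp [le_iff, strictAbove] at h
end

section
/- Let X be a co-tree, m ≥ 1, and let X_1, …, X_m, X_1', …, X_m' be subsets of X such that: each X_i is convex and each X_i' is a downset; ↓X_1 = X_1 ⊎ X_1' and ↓X_i = X_i ⊎ ↓X_{i-1} ⊎ X_i' (disjoint unions) for all 1 < i ≤ m; ↓X_{i-1} ∩ ↑X_i' = ∅ for all 1 < i ≤ m; ↑X_1' = ↑X_1 ⊎ X_1' and ↑X_i = ↑X_{i-1} ∩ ↑X_i' for all 1 < i ≤ m. Then: (1) ↓X_1 ⊆ ↓X_2 ⊆ … ⊆ ↓X_m and X_i' ⊆ ↓X_i for all i ≤ m; (2) ↑X_m ⊆ … ⊆ ↑X_2 ⊆ ↑X_1 and ↑X_i ⊆ ↑X_i' for all i ≤ m; (3) ↓X_i ∩ ↑X_j' = ↑↓X_i ∩ X_j' = ↓X_i ∩ ↑X_j = ∅ for all i < j ≤ m; (4) ↑X_{i-1} ∖ X_{i-1} = ↑X_i = ↑X_i' ∖ X_i' for all 1 < i ≤ m; (5) the sets X_1, …, X_m,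 X_1', …, X_m' are pairwise disjoint. -/
/-!
Write `D i = ↓X_i`, `U i = ↑X_i`, `U' i = ↑X_i'`. Parts (1) and (2) are read off the defining
equations, and (3) reduces to `D (j - 1) ∩ U' j = ∅` by monotonicity of `D`, the downset
property of `X_j'` and the inclusion `U j ⊆ U' j`. For distinct indices part (5) then follows
from (1)–(3), and for equal indices it is one of the assumed disjointness relations.

The chain condition matters only for (4), where it gives the inclusions into `U i`. If `y` lies
above a point `x` of `D i`, then `x` is also below some `w ∈ X_i`, and `y`, `w` are comparable,
so `y ∈ U i` or `y ∈ D i = X_i ∪ D (i - 1) ∪ X_i'`. The cases `y ∈ D (i - 1)` and `y ∈ X_i'`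
remain to be excluded.
* If `x ∈ X_{i-1}` and `y ∉ X_{i-1}`, the first contradicts convexity of `X_{i-1}`; the second
  puts `x` in the downset `X_i'`, which is disjoint from `D (i - 1)`.
* If `x ∈ X_i'` and `y ∉ X_i'`, the first contradicts `D (i - 1) ∩ U' i = ∅`.
-/

/-- The upward closure of a subset of a preorder. -/
def upClo {α : Type*} [Preorder α] (S : Set α) : Set α := {y | ∃ s ∈ S, s ≤ y}

/-- The downward closure of a subset of a preorder. -/
def downClo {α : Type*} [Preorder α] (S : Set α) : Set α := {y | ∃ s ∈ S, y ≤ s}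

theorem subset_upClo {X : Type*} [Preorder X] (S : Set X) : S ⊆ upClo S :=
  fun x hx => ⟨x, hx, le_rfl⟩

theorem subset_downClo {X : Type*} [Preorder X] (S : Set X) : S ⊆ downClo S :=
  fun x hx => ⟨x, hx, le_rfl⟩

/-- In a poset whose principal upsets are chains, every point above `↓S` lies in `↑S` or `↓S`. -/
theorem mem_upClo_or_mem_downClo {X : Type*} [PartialOrder X]
    (hchain : ∀ x : X, IsChain (· ≤ ·) (Set.Ici x)) {S : Set X} {x y : X}
    (hx : x ∈ downClo S) (hxy : x ≤ y) : y ∈ upClo S ∨ y ∈ downClo S := by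
  obtain ⟨w, hw, hxw⟩ := hx
  rcases (hchain x).total hxw hxy with h | h
  · exact Or.inl ⟨w, hw, h⟩
  · exact Or.inr ⟨w, hw, h⟩

/-- Let `X` be a co-tree (a partial order with a greatest element whose
principal upsets are chains), `m ≥ 1`, and let `Xs 1, …, Xs m, Xs' 1, …, Xs' m` be subsets of
`X` such that: each `Xs i` is convex and each `Xs' i` is a downset;
`↓Xs 1 = Xs 1 ⊎ Xs' 1` and `↓Xs i = Xs i ⊎ ↓Xs (i-1) ⊎ Xs' i` (disjoint unions) for
`1 < i ≤ m`; `↓Xs (i-1) ∩ ↑Xs' i = ∅` for `1 < i ≤ m`; `↑Xs' 1 = ↑Xs 1 ⊎ Xs' 1` and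
`↑Xs i = ↑Xs (i-1) ∩ ↑Xs' i` for `1 < i ≤ m`.  Then conclusions (1)–(5) hold. -/
theorem consequences_of_IH
    {X : Type*} [PartialOrder X] [OrderTop X]
    (hchain : ∀ x : X, IsChain (· ≤ ·) (Set.Ici x))
    (m : ℕ) (hm : 1 ≤ m)
    (Xs Xs' : ℕ → Set X)
    (hconv : ∀ i, 1 ≤ i → i ≤ m → downClo (Xs i) ∩ upClo (Xs i) ⊆ Xs i)
    (hdownset : ∀ i, 1 ≤ i → i ≤ m → downClo (Xs' i) = Xs' i)
    (hii1 : downClo (Xs 1) = Xs 1 ∪ Xs' 1 ∧ Disjoint (Xs 1) (Xs' 1))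
    (hii : ∀ i, 1 < i → i ≤ m →
        downClo (Xs i) = Xs i ∪ downClo (Xs (i - 1)) ∪ Xs' i ∧
        Disjoint (Xs i) (downClo (Xs (i - 1))) ∧ Disjoint (Xs i) (Xs' i) ∧
        Disjoint (downClo (Xs (i - 1))) (Xs' i))
    (hiii : ∀ i, 1 < i → i ≤ m → downClo (Xs (i - 1)) ∩ upClo (Xs' i) = ∅)
    (hiv1 : upClo (Xs' 1) = upClo (Xs 1) ∪ Xs' 1 ∧ Disjoint (upClo (Xs 1)) (Xs' 1))
    (hiv : ∀ i, 1 < i → i ≤ m → upClo (Xs i) = upClo (Xs (i - 1)) ∩ upClo (Xs' i)) :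
    -- (1)
    (∀ i, 1 ≤ i → i < m → downClo (Xs i) ⊆ downClo (Xs (i + 1))) ∧
    (∀ i, 1 ≤ i → i ≤ m → Xs' i ⊆ downClo (Xs i)) ∧
    -- (2)
    (∀ i, 1 ≤ i → i < m → upClo (Xs (i + 1)) ⊆ upClo (Xs i)) ∧
    (∀ i, 1 ≤ i → i ≤ m → upClo (Xs i) ⊆ upClo (Xs' i)) ∧
    -- (3)
    (∀ i j, 1 ≤ i → i < j → j ≤ m →
        downClo (Xs i) ∩ upClo (Xs' j) = ∅ ∧
        upClo (downClo (Xs i)) ∩ Xs' j = ∅ ∧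
        downClo (Xs i) ∩ upClo (Xs j) = ∅) ∧
    -- (4)
    (∀ i, 1 < i → i ≤ m →
        upClo (Xs (i - 1)) \ Xs (i - 1) = upClo (Xs i) ∧
        upClo (Xs i) = upClo (Xs' i) \ Xs' i) ∧
    -- (5)
    (∀ i j, 1 ≤ i → i ≤ m → 1 ≤ j → j ≤ m →
        (i ≠ j → Disjoint (Xs i) (Xs j) ∧ Disjoint (Xs' i) (Xs' j)) ∧
        Disjoint (Xs i) (Xs' j)) := by
  have h1s : ∀ i, 1 < i → i ≤ m → downClo (Xs (i - 1)) ⊆ downClo (Xs i) := by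
    intro i hi him x hx
    rw [(hii i hi him).1]
    exact Or.inl (Or.inr hx)
  have h1 : ∀ i j, 1 ≤ i → i ≤ j → j ≤ m → downClo (Xs i) ⊆ downClo (Xs j) := by
    intro i j hi hij
    induction j, hij using Nat.le_induction with
    | base => exact fun _ => subset_rfl
    | succ j hij ih =>
      exact fun hj => (ih (by omega)).trans (h1s (j + 1) (by omega) hj)
  have h1' : ∀ i, 1 ≤ i → i ≤ m → Xs' i ⊆ downClo (Xs i) := by
    intro i hi him x hx
    rcases hi.eq_or_lt with rfl | hi
    · rw [hii1.1]
      exact Or.inr hx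
    · rw [(hii i hi him).1]
      exact Or.inr hx
  have h2' : ∀ i, 1 ≤ i → i ≤ m → upClo (Xs i) ⊆ upClo (Xs' i) := by
    intro i hi him x hx
    rcases hi.eq_or_lt with rfl | hi
    · rw [hiv1.1]
      exact Or.inl hx
    · rw [hiv i hi him] at hx
      exact hx.2
  have hdown : ∀ i, 1 ≤ i → i ≤ m → ∀ x y, x ≤ y → y ∈ Xs' i → x ∈ Xs' i := by
    intro i hi him x y hxy hy
    rw [← hdownset i hi him]
    exact ⟨y, hy, hxy⟩
  have h3a : ∀ i j, 1 ≤ i → i < j → j ≤ m → ∀ x, x ∈ downClo (Xs i) → x ∉ upClo (Xs' j) := by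
    intro i j hi hij hj x hx hx'
    have hmem : x ∈ downClo (Xs (j - 1)) ∩ upClo (Xs' j) :=
      ⟨h1 i (j - 1) hi (by omega) (by omega) hx, hx'⟩
    rw [hiii j (by omega) hj] at hmem
    exact hmem
  have h3c : ∀ i j, 1 ≤ i → i < j → j ≤ m → ∀ x, x ∈ downClo (Xs i) → x ∉ upClo (Xs j) :=
    fun i j hi hij hj x hx hx' => h3a i j hi hij hj x hx (h2' j (by omega) hj hx')
  refine ⟨fun i hi him => h1 i (i + 1) hi (by omega) him, h1', ?_, h2', ?_, ?_, ?_⟩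
  · intro i hi him x hx
    rw [hiv (i + 1) (by omega) him] at hx
    exact hx.1
  · intro i j hi hij hj
    refine ⟨?_, ?_, ?_⟩
    · exact Set.eq_empty_of_forall_notMem fun x hx => h3a i j hi hij hj x hx.1 hx.2
    · refine Set.eq_empty_of_forall_notMem ?_
      rintro y ⟨⟨d, hd, hdy⟩, hy⟩
      exact h3a i j hi hij hj d hd (subset_upClo _ (hdown j (by omega) hj d y hdy hy))
    · exact Set.eq_empty_of_forall_notMem fun x hx => h3c i j hi hij hj x hx.1 hx.2
  · intro i hi him
    obtain ⟨hD, -, hXX', hDX'⟩ := hii i hi him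
    refine ⟨Set.Subset.antisymm ?_ ?_, Set.Subset.antisymm ?_ ?_⟩
    · rintro y ⟨⟨x, hx, hxy⟩, hy⟩
      have hxD := subset_downClo _ hx
      rcases mem_upClo_or_mem_downClo hchain (h1s i hi him hxD) hxy with h | h
      · exact h
      rw [hD] at h
      rcases h with (h | h) | h
      · exact subset_upClo _ h
      · exact absurd (hconv (i - 1) (by omega) (by omega) ⟨h, x, hx, hxy⟩) hy
      · exact absurd (hdown i hi.le him x y hxy h) (Set.disjoint_left.1 hDX' hxD)
    · intro y hy
      refine ⟨?_, fun h => h3c (i - 1) i (by omega) (by omega) him y (subset_downClo _ h) hy⟩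
      rw [hiv i hi him] at hy
      exact hy.1
    · intro y hy
      refine ⟨h2' i hi.le him hy, fun h => ?_⟩
      obtain ⟨w, hw, hwy⟩ := hy
      exact Set.disjoint_left.1 hXX' hw (hdown i hi.le him w y hwy h)
    · rintro y ⟨⟨x, hx, hxy⟩, hy⟩
      rcases mem_upClo_or_mem_downClo hchain (h1' i hi.le him hx) hxy with h | h
      · exact h
      rw [hD] at h
      rcases h with (h | h) | h
      · exact subset_upClo _ h
      · exact absurd ⟨x, hx, hxy⟩ (h3a (i - 1) i (by omega) (by omega) him y h)
      · exact absurd h hy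
  · have hXs : ∀ i j, 1 ≤ i → i < j → j ≤ m → Disjoint (Xs i) (Xs j) :=
      fun i j hi hij hj => Set.disjoint_left.2 fun x hx hx' =>
        h3c i j hi hij hj x (subset_downClo _ hx) (subset_upClo _ hx')
    have hXs' : ∀ i j, 1 ≤ i → i < j → j ≤ m → Disjoint (Xs' i) (Xs' j) :=
      fun i j hi hij hj => Set.disjoint_left.2 fun x hx hx' =>
        h3a i j hi hij hj x (h1' i hi (by omega) hx) (subset_upClo _ hx')
    intro i j hi him hj hjm
    refine ⟨fun hne => ?_, ?_⟩
    · rcases hne.lt_or_gt with h | h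
      · exact ⟨hXs i j hi h hjm, hXs' i j hi h hjm⟩
      · exact ⟨(hXs j i hj h him).symm, (hXs' j i hj h him).symm⟩
    · rcases lt_trichotomy i j with h | rfl | h
      · exact Set.disjoint_left.2 fun x hx hx' =>
          h3a i j hi h hjm x (subset_downClo _ hx) (subset_upClo _ hx')
      · rcases hi.eq_or_lt with rfl | hi
        · exact hii1.2
        · exact (hii i hi him).2.2.1
      · exact Set.disjoint_left.2 fun x hx hx' =>
          h3c j i hj h him x (h1' j hj hjm hx') (subset_upClo _ hx)
end

section
/- Let n ≥ 1 and let X be a bi-Esakia co-tree that contains points x_1, …, x_n, x_1', …, x_n' forming a copy of the n-comb C_n as a subposet (x_i < x_j iff i < j; x_i' < x_j iff i ≤ j; the x_i' are pairwise incomparable and below no other points of the copy), with x_n equal to the greatest element of X. Then there exist clopen subsets X_1, …, X_n, X_1', …, X_n' of X such that: (IH.i) for all i ≤ n, X_i is convex with x_i ∈ X_i, X_i' is a downset with x_i' ∈ X_i', and X_i ∩ ↑↓{x_j'} = ∅ for all j with i < j ≤ n; (IH.ii) ↓X_1 = X_1 ⊎ X_1' and ↓X_i = X_i ⊎ ↓X_{i-1}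 ⊎ X_i' (disjoint unions) for all 1 < i ≤ n; (IH.iii) ↓X_{i-1} ∩ ↑X_i' = ∅ for all 1 < i ≤ n; (IH.iv) ↑X_1' = ↑X_1 ⊎ X_1' and ↑X_i = ↑X_{i-1} ∩ ↑X_i' for all 1 < i ≤ n. -/
section helpers

variable {X : Type*} [PartialOrder X]

theorem isLowerSet_downClo (S : Set X) : IsLowerSet (downClo S) := by
  rintro a b hba ⟨s, hs, has⟩
  exact ⟨s, hs, hba.trans has⟩

theorem isUpperSet_upClo (S : Set X) : IsUpperSet (upClo S) := by
  rintro a b hab ⟨s, hs, hsa⟩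
  exact ⟨s, hs, hsa.trans hab⟩

theorem total_of_isChain_Ici (hchain : ∀ x : X, IsChain (· ≤ ·) (Set.Ici x)) {z a b : X}
    (ha : z ≤ a) (hb : z ≤ b) : a ≤ b ∨ b ≤ a :=
  (hchain z).total ha hb

/-- Incomparable points of a bi-Esakia co-tree lie in disjoint clopen downsets. -/
theorem exists_disjoint_lower [TopologicalSpace X]
    (hclo : ∀ U : Set X, IsClopen U → IsClopen (upClo U) ∧ IsClopen (downClo U))
    (hpsa : ∀ x y : X, ¬ x ≤ y → ∃ U : Set X, IsClopen U ∧ IsUpperSet U ∧ x ∈ U ∧ y ∉ U)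
    (hchain : ∀ x : X, IsChain (· ≤ ·) (Set.Ici x)) {a b : X}
    (hab : ¬ a ≤ b) (hba : ¬ b ≤ a) :
    ∃ P Q : Set X, IsClopen P ∧ IsClopen Q ∧ IsLowerSet P ∧ IsLowerSet Q ∧ Disjoint P Q ∧
      a ∈ P ∧ b ∈ Q := by
  obtain ⟨A, hA, hAu, haA, hbA⟩ := hpsa a b hab
  obtain ⟨B, hB, hBu, hbB, haB⟩ := hpsa b a hba
  refine ⟨downClo (A \ B), downClo (B \ A), (hclo _ (hA.diff hB)).2, (hclo _ (hB.diff hA)).2,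
    isLowerSet_downClo _, isLowerSet_downClo _, ?_, ⟨a, ⟨haA, haB⟩, le_rfl⟩,
    ⟨b, ⟨hbB, hbA⟩, le_rfl⟩⟩
  rw [Set.disjoint_left]
  rintro z ⟨s, ⟨hsA, hsB⟩, hzs⟩ ⟨t, ⟨htB, htA⟩, hzt⟩
  rcases total_of_isChain_Ici hchain hzs hzt with h | h
  · exact htA (hAu h hsA)
  · exact hsB (hBu h htB)

/-- The tower of clopen upsets.  The last two properties provide, for the `i`-th spine set, points
of the `(i - 1)`-st spine set and of the `i`-th tooth set below each of its members. -/
theorem exists_tower [TopologicalSpace X]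
    (hclo : ∀ U : Set X, IsClopen U → IsClopen (upClo U) ∧ IsClopen (downClo U))
    (hpsa : ∀ x y : X, ¬ x ≤ y → ∃ U : Set X, IsClopen U ∧ IsUpperSet U ∧ x ∈ U ∧ y ∉ U)
    (hchain : ∀ x : X, IsChain (· ≤ ·) (Set.Ici x))
    (n : ℕ) (hn : 1 ≤ n) (xs xs' : ℕ → X)
    (hxx : ∀ i j, 1 ≤ i → i ≤ n → 1 ≤ j → j ≤ n → (xs i ≤ xs j ↔ i ≤ j))
    (hx'x : ∀ i j, 1 ≤ i → i ≤ n → 1 ≤ j → j ≤ n → (xs' i ≤ xs j ↔ i ≤ j))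
    (hxx' : ∀ i j, 1 ≤ i → i ≤ n → 1 ≤ j → j ≤ n → ¬ xs i ≤ xs' j) :
    ∃ T : ℕ → Set X, (∀ i, IsClopen (T i)) ∧ (∀ i, IsUpperSet (T i)) ∧
      (∀ i, T (i + 1) ⊆ T i) ∧
      (∀ i, 1 ≤ i → i ≤ n → xs i ∈ T i ∧ xs i ∉ T (i + 1)) ∧
      (∀ i, i < n → xs' (i + 1) ∉ T (i + 1) ∧ ∀ w ∈ T i \ T (i + 1), ¬ xs' (i + 1) ≤ w) ∧
      (∀ i, 1 ≤ i → ∀ y ∈ T (i + 1), ∃ z ≤ y, z ∈ T i \ T (i + 1)) ∧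
      (∀ i, ∀ y ∈ T (i + 1), ∃ z ≤ y, z ∉ T (i + 1) ∧ ∀ w ∈ T i \ T (i + 1), ¬ z ≤ w) := by
  -- `P i`, `Q i` are `U i`, `V (i + 1)`.  At `i = 0` only `V 1` matters, so `P 0 = ∅`; for
  -- `i ≥ n` there is nothing to separate from `xs i`, so `P i` is everything and `Q i = ∅`.
  have hPQ : ∀ i : ℕ, ∃ P Q : Set X, IsClopen P ∧ IsClopen Q ∧ IsLowerSet P ∧ IsLowerSet Q ∧
      Disjoint P Q ∧ (1 ≤ i → i ≤ n → xs i ∈ P) ∧ (i < n → xs' (i + 1) ∈ Q) ∧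
      (i = 0 → xs 1 ∉ Q) := by
    intro i
    rcases Nat.eq_zero_or_pos i with rfl | hi
    · obtain ⟨A, hA, hAu, h1, h2⟩ := hpsa (xs 1) (xs' 1) (hxx' 1 1 le_rfl hn le_rfl hn)
      exact ⟨∅, Aᶜ, isClopen_empty, hA.compl, isLowerSet_empty, hAu.compl,
        Set.empty_disjoint _, by omega, fun _ => h2, fun _ h => h h1⟩
    rcases Nat.lt_or_ge i n with hin | hin
    · obtain ⟨P, Q, hP, hQ, hPl, hQl, hd, ha, hb⟩ := exists_disjoint_lower hclo hpsa hchain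
        (hxx' i (i + 1) hi hin.le (by omega) hin)
        (fun h => by have := (hx'x (i + 1) i (by omega) hin hi hin.le).1 h; omega)
      exact ⟨P, Q, hP, hQ, hPl, hQl, hd, fun _ _ => ha, fun _ => hb, by omega⟩
    · exact ⟨Set.univ, ∅, isClopen_univ, isClopen_empty, isLowerSet_univ, isLowerSet_empty,
        Set.disjoint_empty _, fun _ _ => trivial, by omega, by omega⟩
  choose P Q hP hQ hPl hQl hd hxP hxQ hx1 using hPQ
  let T : ℕ → Set X := fun i => Nat.rec (Q 0)ᶜ (fun i S => upClo (S ∩ upClo (Q i) ∩ P (i + 1))) i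
  have hT0 : T 0 = (Q 0)ᶜ := rfl
  have hTs : ∀ i, T (i + 1) = upClo (T i ∩ upClo (Q i) ∩ P (i + 1)) := fun _ => rfl
  clear_value T
  have hTc : ∀ i, IsClopen (T i) := by
    intro i
    induction i with
    | zero => rw [hT0]; exact (hQ 0).compl
    | succ i ih =>
      rw [hTs]; exact (hclo _ ((ih.inter (hclo _ (hQ i)).1).inter (hP (i + 1)))).1
  have hTu : ∀ i, IsUpperSet (T i) := by
    intro i
    cases i with
    | zero => rw [hT0]; exact (hQl 0).compl
    | succ i => rw [hTs]; exact isUpperSet_upClo _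
  have hanti : ∀ i, T (i + 1) ⊆ T i := by
    intro i y hy
    rw [hTs] at hy
    obtain ⟨t, ⟨⟨ht, -⟩, -⟩, hty⟩ := hy
    exact hTu i hty ht
  have hQT' : ∀ i, ∀ v ∈ Q i, v ∉ T i := by
    intro i v hv hvT
    cases i with
    | zero => rw [hT0] at hvT; exact hvT hv
    | succ i =>
      rw [hTs] at hvT
      obtain ⟨t, ⟨-, ht⟩, htv⟩ := hvT
      exact Set.disjoint_left.1 (hd (i + 1)) ht (hQl _ htv hv)
  have hPT : ∀ i, ∀ u ∈ P i, u ∉ T (i + 1) := by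
    intro i u hu huT
    rw [hTs] at huT
    obtain ⟨t, ⟨⟨-, v, hv, hvt⟩, -⟩, htu⟩ := huT
    exact Set.disjoint_left.1 (hd i) (hPl i (hvt.trans htu) hu) hv
  -- A member of `T i` above a point of `Q i` is comparable with `t`, and lies in `T (i + 1)`
  -- whichever way the comparison goes.
  have hkey : ∀ i, ∀ t ∈ T i ∩ upClo (Q i) ∩ P (i + 1), ∀ v ∈ Q i, v ≤ t →
      ∀ w ∈ T i \ T (i + 1), ¬ v ≤ w := by
    rintro i t ht v hv hvt w ⟨hwT, hw⟩ hvw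
    apply hw
    rw [hTs]
    rcases total_of_isChain_Ici hchain hvt hvw with h | h
    · exact ⟨t, ht, h⟩
    · exact ⟨w, ⟨⟨hwT, v, hv, hvw⟩, hPl _ h ht.2⟩, le_rfl⟩
  have hxT : ∀ i, i < n → xs (i + 1) ∈ T i ∩ upClo (Q i) ∩ P (i + 1) := by
    intro i
    induction i with
    | zero =>
      intro h
      refine ⟨⟨?_, xs' 1, hxQ 0 h, (hx'x 1 1 le_rfl hn le_rfl hn).2 le_rfl⟩, hxP 1 le_rfl h⟩
      rw [hT0]; exact hx1 0 rfl
    | succ i ih =>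
      intro h
      refine ⟨⟨?_, xs' (i + 2), hxQ (i + 1) h,
        (hx'x (i + 2) (i + 2) (by omega) h (by omega) h).2 le_rfl⟩, hxP (i + 2) (by omega) h⟩
      rw [hTs]
      exact ⟨xs (i + 1), ih (by omega),
        (hxx (i + 1) (i + 2) (by omega) (by omega) (by omega) h).2 (by omega)⟩
  refine ⟨T, hTc, hTu, hanti, ?_, ?_, ?_, ?_⟩
  · intro i h1 hi
    refine ⟨?_, hPT i _ (hxP i h1 hi)⟩
    obtain ⟨k, rfl⟩ : ∃ k, i = k + 1 := ⟨i - 1, by omega⟩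
    rw [hTs]
    exact ⟨_, hxT k (by omega), le_rfl⟩
  · intro i hi
    exact ⟨fun h => hQT' i _ (hxQ i hi) (hanti i h), hkey i _ (hxT i hi) _ (hxQ i hi)
      ((hx'x (i + 1) (i + 1) (by omega) hi (by omega) hi).2 le_rfl)⟩
  · intro i hi y hy
    obtain ⟨k, rfl⟩ : ∃ k, i = k + 1 := ⟨i - 1, by omega⟩
    have hy' := hanti _ hy
    rw [hTs] at hy'
    obtain ⟨t, ht, hty⟩ := hy'
    refine ⟨t, hty, ?_, hPT _ _ ht.2⟩
    rw [hTs]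
    exact ⟨t, ht, le_rfl⟩
  · intro i y hy
    rw [hTs] at hy
    obtain ⟨t, ht, hty⟩ := hy
    obtain ⟨v, hv, hvt⟩ := ht.1.2
    exact ⟨v, hvt.trans hty, fun h => hQT' i v hv (hanti i h), hkey i t ht v hv hvt⟩

end helpers

/-- Let `n ≥ 1` and let `X` be a bi-Esakia co-tree containing points
`xs 1, …, xs n, xs' 1, …, xs' n` forming a copy of the `n`-comb as a subposet
(`xs i ≤ xs j ↔ i ≤ j`, `xs' i ≤ xs j ↔ i ≤ j`, `xs' i ≤ xs' j ↔ i = j`, and never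
`xs i ≤ xs' j`), with `xs n` the greatest element of `X`.  Then there exist clopen subsets
`Xs 1, …, Xs n, Xs' 1, …, Xs' n` of `X` satisfying conditions (IH.i)–(IH.iv). -/
theorem exists_clopens_IH
    (n : ℕ) (hn : 1 ≤ n)
    {X : Type*} [TopologicalSpace X] [PartialOrder X] [CompactSpace X] [OrderTop X]
    (hclo : ∀ U : Set X, IsClopen U → IsClopen (upClo U) ∧ IsClopen (downClo U))
    (hpsa : ∀ x y : X, ¬ x ≤ y → ∃ U : Set X, IsClopen U ∧ IsUpperSet U ∧ x ∈ U ∧ y ∉ U)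
    (hchain : ∀ x : X, IsChain (· ≤ ·) (Set.Ici x))
    (xs xs' : ℕ → X)
    (hxx : ∀ i j, 1 ≤ i → i ≤ n → 1 ≤ j → j ≤ n → (xs i ≤ xs j ↔ i ≤ j))
    (hx'x : ∀ i j, 1 ≤ i → i ≤ n → 1 ≤ j → j ≤ n → (xs' i ≤ xs j ↔ i ≤ j))
    (hx'x' : ∀ i j, 1 ≤ i → i ≤ n → 1 ≤ j → j ≤ n → (xs' i ≤ xs' j ↔ i = j))
    (hxx' : ∀ i j, 1 ≤ i → i ≤ n → 1 ≤ j → j ≤ n → ¬ xs i ≤ xs' j)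
    (htop : xs n = ⊤) :
    ∃ Xs Xs' : ℕ → Set X,
      (∀ i, 1 ≤ i → i ≤ n → IsClopen (Xs i) ∧ IsClopen (Xs' i)) ∧
      -- (IH.i)
      (∀ i, 1 ≤ i → i ≤ n →
        downClo (Xs i) ∩ upClo (Xs i) ⊆ Xs i ∧ xs i ∈ Xs i ∧
        downClo (Xs' i) = Xs' i ∧ xs' i ∈ Xs' i ∧
        (∀ j, i < j → j ≤ n → Xs i ∩ upClo (downClo {xs' j}) = ∅)) ∧
      -- (IH.ii)
      (downClo (Xs 1) = Xs 1 ∪ Xs' 1 ∧ Disjoint (Xs 1) (Xs' 1)) ∧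
      (∀ i, 1 < i → i ≤ n →
        downClo (Xs i) = Xs i ∪ downClo (Xs (i - 1)) ∪ Xs' i ∧
        Disjoint (Xs i) (downClo (Xs (i - 1))) ∧ Disjoint (Xs i) (Xs' i) ∧
        Disjoint (downClo (Xs (i - 1))) (Xs' i)) ∧
      -- (IH.iii)
      (∀ i, 1 < i → i ≤ n → downClo (Xs (i - 1)) ∩ upClo (Xs' i) = ∅) ∧
      -- (IH.iv)
      (upClo (Xs' 1) = upClo (Xs 1) ∪ Xs' 1 ∧ Disjoint (upClo (Xs 1)) (Xs' 1)) ∧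
      (∀ i, 1 < i → i ≤ n → upClo (Xs i) = upClo (Xs (i - 1)) ∩ upClo (Xs' i)) := by
  obtain ⟨T, hTc, hTu, hanti, hxT, hx'T, hA, hB⟩ :=
    exists_tower hclo hpsa hchain n hn xs xs' hxx hx'x hxx'
  have tot : ∀ {z a b : X}, z ≤ a → z ≤ b → a ≤ b ∨ b ≤ a :=
    fun ha hb => total_of_isChain_Ici hchain ha hb
  -- Taking `S 0` empty makes `W 0` below empty, so that `i = 1` needs no separate definition.
  obtain ⟨S, hS0, hS⟩ : ∃ S : ℕ → Set X, S 0 = ∅ ∧ ∀ i, S (i + 1) = T (i + 1) \ T (i + 2) :=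
    ⟨fun i => Nat.casesOn i ∅ (fun i => T (i + 1) \ T (i + 2)), rfl, fun _ => rfl⟩
  have hSc : ∀ i, IsClopen (S i) := by
    intro i
    cases i with
    | zero => rw [hS0]; exact isClopen_empty
    | succ i => rw [hS]; exact (hTc _).diff (hTc _)
  have hST : ∀ i, S i ⊆ T i \ T (i + 1) := by
    intro i
    cases i with
    | zero => rw [hS0]; exact Set.empty_subset _
    | succ i => rw [hS]
  obtain ⟨W, hWn, hW, hWc⟩ : ∃ W : ℕ → Set X, W n = S n ∧
      (∀ i, i < n → W i = S i ∩ downClo (W (i + 1))) ∧ ∀ i, IsClopen (W i) := by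
    -- `Y k` is `W (n - k)`.
    let Y : ℕ → Set X := fun k => Nat.rec (S n) (fun k Z => S (n - (k + 1)) ∩ downClo Z) k
    have hYs : ∀ k, Y (k + 1) = S (n - (k + 1)) ∩ downClo (Y k) := fun _ => rfl
    have hYc : ∀ k, IsClopen (Y k) := by
      intro k
      induction k with
      | zero => exact hSc n
      | succ k ih => rw [hYs]; exact (hSc _).inter (hclo _ ih).2
    refine ⟨fun i => Y (n - i), ?_, ?_, fun i => hYc _⟩
    · show Y (n - n) = S n
      rw [Nat.sub_self]
      rfl
    · intro i hi
      show Y (n - i) = S i ∩ downClo (Y (n - (i + 1)))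
      obtain ⟨k, hk⟩ : ∃ k, n - i = k + 1 := ⟨n - i - 1, by omega⟩
      rw [hk, hYs, show n - (k + 1) = i by omega, show n - (i + 1) = k by omega]
  have hW0 : W 0 = ∅ := by rw [hW 0 hn, hS0, Set.empty_inter]
  have hD0 : downClo (W 0) = ∅ := by rw [hW0]; ext y; simp [downClo]
  have hWS : ∀ i, i ≤ n → W i ⊆ S i := by
    intro i hi
    rcases hi.eq_or_lt with rfl | h
    · rw [hWn]
    · rw [hW i h]; exact Set.inter_subset_left
  have hWmem : ∀ i, i < n → ∀ y ∈ S i, y ∈ downClo (W (i + 1)) → y ∈ W i := by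
    intro i hi y h1 h2
    rw [hW i hi]; exact ⟨h1, h2⟩
  have hWsub : ∀ i, i < n → downClo (W i) ⊆ downClo (W (i + 1)) := by
    rintro i hi y ⟨w, hw, hyw⟩
    rw [hW i hi] at hw
    exact isLowerSet_downClo _ hyw hw.2
  have hWmono : ∀ i j, i ≤ j → j ≤ n → downClo (W i) ⊆ downClo (W j) := by
    intro i j hij
    induction j, hij using Nat.le_induction with
    | base => intro _; exact subset_rfl
    | succ j _ ih => intro h; exact (ih (by omega)).trans (hWsub j (by omega))
  -- `W i` is the part of `↓W i` inside `T i`.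
  have hWT : ∀ i, 1 ≤ i → i ≤ n → ∀ y ∈ downClo (W i), y ∈ T i → y ∈ W i := by
    rintro i h1 hi y ⟨c, hc, hyc⟩ hy
    obtain ⟨k, rfl⟩ : ∃ k, i = k + 1 := ⟨i - 1, by omega⟩
    have hyS : y ∈ S (k + 1) := by
      rw [hS]
      exact ⟨hy, fun h => (hST _ (hWS _ hi hc)).2 (hTu _ hyc h)⟩
    rcases hi.eq_or_lt with h | h
    · subst h; rw [hWn]; exact hyS
    · exact hWmem _ h y hyS (hWsub _ h ⟨c, hc, hyc⟩)
  have hxW : ∀ i, 1 ≤ i → i ≤ n → xs i ∈ W i := by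
    intro i h1 hi
    have hxS : ∀ j, 1 ≤ j → j ≤ n → xs j ∈ S j := by
      intro j hj hjn
      obtain ⟨k, rfl⟩ : ∃ k, j = k + 1 := ⟨j - 1, by omega⟩
      rw [hS]; exact hxT _ hj hjn
    induction hi using Nat.decreasingInduction with
    | self => rw [hWn]; exact hxS n hn le_rfl
    | of_succ i hi ih =>
      exact hWmem i hi _ (hxS i h1 hi.le) ⟨_, ih (by omega),
        (hxx i (i + 1) h1 hi.le (by omega) hi).2 (by omega)⟩
  let W' : ℕ → Set X := fun i => downClo (W i) \ (T i ∪ downClo (W (i - 1)))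
  have hW'mem : ∀ i y, y ∈ W' i ↔ y ∈ downClo (W i) ∧ y ∉ T i ∧ y ∉ downClo (W (i - 1)) := by
    intro i y
    simp only [W', Set.mem_sdiff, Set.mem_union, not_or]
  have hW'c : ∀ i, IsClopen (W' i) := fun i =>
    (hclo _ (hWc i)).2.diff ((hTc i).union (hclo _ (hWc (i - 1))).2)
  clear_value W'
  have hW'l : ∀ i, 1 ≤ i → i ≤ n → IsLowerSet (W' i) := by
    intro i h1 hi p q hqp hp
    rw [hW'mem] at hp ⊢
    obtain ⟨hp1, hp2, hp3⟩ := hp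
    refine ⟨isLowerSet_downClo _ hqp hp1, fun h => hp2 (hTu i hqp h), ?_⟩
    rintro ⟨r, hr, hqr⟩
    obtain ⟨k, rfl⟩ : ∃ k, i = k + 1 := ⟨i - 1, by omega⟩
    simp only [Nat.add_sub_cancel] at hr hp3
    rcases tot hqp hqr with h | h
    · exact hp3 ⟨r, hr, h⟩
    · rcases Nat.eq_zero_or_pos k with rfl | hk
      · rw [hW0] at hr; exact hr
      · have hpS : p ∈ S k := by
          obtain ⟨l, rfl⟩ : ∃ l, k = l + 1 := ⟨k - 1, by omega⟩
          rw [hS]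
          exact ⟨hTu _ h (hST _ (hWS _ (by omega) hr)).1, hp2⟩
        exact hp3 ⟨p, hWmem k (by omega) p hpS hp1, le_rfl⟩
  have hx'W' : ∀ i, 1 ≤ i → i ≤ n → xs' i ∈ W' i := by
    intro i h1 hi
    rw [hW'mem]
    obtain ⟨k, rfl⟩ : ∃ k, i = k + 1 := ⟨i - 1, by omega⟩
    obtain ⟨h2, h3⟩ := hx'T k hi
    refine ⟨⟨_, hxW _ h1 hi, (hx'x _ _ h1 hi h1 hi).2 le_rfl⟩, h2, ?_⟩
    rintro ⟨w, hw, hle⟩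
    exact h3 w (hST _ (hWS k (by omega) hw)) hle
  -- The decomposition of `↓W i`, including `i = 1`, where the middle part is empty.
  have hdec : ∀ i, 1 ≤ i → i ≤ n → downClo (W i) = W i ∪ downClo (W (i - 1)) ∪ W' i ∧
      Disjoint (W i) (downClo (W (i - 1))) ∧ Disjoint (W i) (W' i) ∧
      Disjoint (downClo (W (i - 1))) (W' i) := by
    intro i h1 hi
    refine ⟨?_, ?_, ?_, ?_⟩
    · ext y
      constructor
      · intro hy
        by_cases h2 : y ∈ T i
        · exact Or.inl (Or.inl (hWT i h1 hi y hy h2))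
        by_cases h3 : y ∈ downClo (W (i - 1))
        · exact Or.inl (Or.inr h3)
        · exact Or.inr ((hW'mem i y).2 ⟨hy, h2, h3⟩)
      · rintro ((hy | hy) | hy)
        · exact ⟨y, hy, le_rfl⟩
        · exact hWmono (i - 1) i (by omega) hi hy
        · exact ((hW'mem i y).1 hy).1
    · rw [Set.disjoint_left]
      rintro y hy ⟨c, hc, hyc⟩
      have := (hST _ (hWS (i - 1) (by omega) hc)).2
      rw [show i - 1 + 1 = i by omega] at this
      exact this (hTu i hyc (hST _ (hWS i hi hy)).1)
    · rw [Set.disjoint_left]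
      intro y hy hy'
      exact ((hW'mem i y).1 hy').2.1 (hST _ (hWS i hi hy)).1
    · rw [Set.disjoint_left]
      intro y hy hy'
      exact ((hW'mem i y).1 hy').2.2 hy
  have hWW' : ∀ i, 1 ≤ i → i ≤ n → W i ⊆ upClo (W' i) := by
    intro i h1 hi y hy
    obtain ⟨k, rfl⟩ : ∃ k, i = k + 1 := ⟨i - 1, by omega⟩
    obtain ⟨z, hzy, hz, hzw⟩ := hB k y (hST _ (hWS _ hi hy)).1
    refine ⟨z, (hW'mem _ _).2 ⟨⟨y, hy, hzy⟩, hz, ?_⟩, hzy⟩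
    rintro ⟨w, hw, hle⟩
    exact hzw w (hST _ (hWS k (by omega) hw)) hle
  refine ⟨W, W', fun i _ _ => ⟨hWc i, hW'c i⟩, ?_, ?_, ?_, ?_, ?_, ?_⟩
  · intro i h1 hi
    refine ⟨?_, hxW i h1 hi, ?_, hx'W' i h1 hi, ?_⟩
    · rintro y ⟨hy, c, hc, hcy⟩
      exact hWT i h1 hi y hy (hTu i hcy (hST _ (hWS i hi hc)).1)
    · ext y
      constructor
      · rintro ⟨s, hs, hys⟩
        exact hW'l i h1 hi hys hs
      · intro hy; exact ⟨y, hy, le_rfl⟩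
    · intro j hij hj
      rw [Set.eq_empty_iff_forall_notMem]
      rintro y ⟨hy, z, ⟨s, rfl, hzs⟩, hzy⟩
      have hz := hW'l j (by omega) hj hzs (hx'W' j (by omega) hj)
      exact ((hW'mem j z).1 hz).2.2 (hWmono i (j - 1) (by omega) (by omega) ⟨y, hy, hzy⟩)
  · obtain ⟨h1, -, h3, -⟩ := hdec 1 le_rfl hn
    rw [Nat.sub_self, hD0, Set.union_empty] at h1
    exact ⟨h1, h3⟩
  · intro i h1 hi
    exact hdec i h1.le hi
  · intro i h1 hi
    rw [Set.eq_empty_iff_forall_notMem]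
    rintro y ⟨hy, c, hc, hcy⟩
    exact ((hW'mem i c).1 hc).2.2 (isLowerSet_downClo _ hcy hy)
  · obtain ⟨h1, -, h3, -⟩ := hdec 1 le_rfl hn
    rw [Nat.sub_self, hD0, Set.union_empty] at h1
    refine ⟨?_, ?_⟩
    · ext q
      constructor
      · rintro ⟨p, hp, hpq⟩
        obtain ⟨c, hc, hpc⟩ := ((hW'mem 1 p).1 hp).1
        rcases tot hpq hpc with h | h
        · have hq : q ∈ downClo (W 1) := ⟨c, hc, h⟩
          rw [h1] at hq
          exact hq.imp (fun hq => ⟨q, hq, le_rfl⟩) id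
        · exact Or.inl ⟨c, hc, h⟩
      · rintro (⟨c, hc, hcq⟩ | hq)
        · exact isUpperSet_upClo _ hcq (hWW' 1 le_rfl hn hc)
        · exact ⟨q, hq, le_rfl⟩
    · rw [Set.disjoint_left]
      rintro y ⟨c, hc, hcy⟩ hy
      exact Set.disjoint_left.1 h3 hc (hW'l 1 le_rfl hn hcy hy)
  · intro i h1 hi
    obtain ⟨k, rfl⟩ : ∃ k, i = k + 1 := ⟨i - 1, by omega⟩
    obtain ⟨hd, -, -, hd3⟩ := hdec (k + 1) h1.le hi
    simp only [Nat.add_sub_cancel] at hd hd3 ⊢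
    ext y
    constructor
    · rintro ⟨c, hc, hcy⟩
      refine ⟨?_, isUpperSet_upClo _ hcy (hWW' _ h1.le hi hc)⟩
      obtain ⟨z, hzc, hz⟩ := hA k (by omega) c (hST _ (hWS _ hi hc)).1
      have hzS : z ∈ S k := by
        obtain ⟨l, rfl⟩ : ∃ l, k = l + 1 := ⟨k - 1, by omega⟩
        rw [hS]; exact hz
      exact ⟨z, hWmem k hi z hzS ⟨c, hc, hzc⟩, hzc.trans hcy⟩
    · rintro ⟨⟨a, ha, hay⟩, b, hb, hby⟩
      obtain ⟨c, hc, hac⟩ := hWsub k hi ⟨a, ha, le_rfl⟩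
      rcases tot hac hay with h | h
      · exact ⟨c, hc, h⟩
      · have hy : y ∈ downClo (W (k + 1)) := ⟨c, hc, h⟩
        rw [hd] at hy
        -- `y` is above the point `b` of `W' (k + 1)` and the point `a` of `W k`, so it lies
        -- neither in `↓W k` nor in `W' (k + 1)`.
        rcases hy with (hy | hy) | hy
        · exact ⟨y, hy, le_rfl⟩
        · exact absurd hb (Set.disjoint_left.1 hd3 (isLowerSet_downClo _ hby hy))
        · exact absurd (hW'l _ h1.le hi hay hy)
            (Set.disjoint_left.1 hd3 ⟨a, ha, le_rfl⟩)
end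

section
/- Let n ≥ 1 and let X be a bi-Esakia co-tree. Then the n-comb C_n order-embeds into X (i.e. C_n is isomorphic to a subposet of X) if and only if there exists a surjective continuous bi-p-morphism from X onto C_n, where C_n carries the discrete topology. -/
/-- The `n`-comb `C_n`: `Sum.inl i` is the spine point `x_{i+1}` and `Sum.inr i` is the
minimal "tooth" `x'_{i+1}`, for `i : Fin n`.  The co-root is `Sum.inl ⟨n-1,_⟩`. -/
def Comb (n : ℕ) : Type := Fin n ⊕ Fin n

namespace Comb

variable {n : ℕ}

/-- The order of the `n`-comb: `x_i ≤ x_j` iff `i ≤ j`; `x'_i ≤ x_j` iff `i ≤ j`;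
the teeth `x'_i` are pairwise incomparable minimal points. -/
def le : Comb n → Comb n → Prop
  | Sum.inl i, Sum.inl j => i ≤ j
  | Sum.inr i, Sum.inl j => i ≤ j
  | Sum.inr i, Sum.inr j => i = j
  | Sum.inl _, Sum.inr _ => False

instance : PartialOrder (Comb n) where
  le := le
  le_refl x := by
    cases x with
    | inl i => exact (le_refl i : le (Sum.inl i) (Sum.inl i))
    | inr i => exact (rfl : i = i)
  le_trans x y z hxy hyz := by
    cases x with
    | inl i =>
      cases y with
      | inl j =>
        cases z with
        | inl k => exact (le_trans (hxy : i ≤ j) (hyz : j ≤ k) : i ≤ k)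
        | inr k => exact ((hyz : False)).elim
      | inr j => exact ((hxy : False)).elim
    | inr i =>
      cases y with
      | inl j =>
        cases z with
        | inl k => exact (le_trans (hxy : i ≤ j) (hyz : j ≤ k) : i ≤ k)
        | inr k => exact ((hyz : False)).elim
      | inr j =>
        cases z with
        | inl k => exact ((le_of_eq (hxy : i = j)).trans (hyz : j ≤ k) : i ≤ k)
        | inr k => exact (Eq.trans (hxy : i = j) (hyz : j = k) : i = k)
  le_antisymm x y hxy hyx := by
    cases x with
    | inl i =>
      cases y with
      | inl j => exact congrArg Sum.inl (le_antisymm (hxy : i ≤ j) (hyx : j ≤ i))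
      | inr j => exact ((hxy : False)).elim
    | inr i =>
      cases y with
      | inl j => exact ((hyx : False)).elim
      | inr j => exact congrArg Sum.inr (hxy : i = j)

instance : TopologicalSpace (Comb n) := ⊥

instance : DiscreteTopology (Comb n) := ⟨rfl⟩

end Comb

namespace Comb

variable {n : ℕ}

/-- The spine point of the comb with index `i`. -/
def spine (i : Fin n) : Comb n := Sum.inl i

/-- The tooth of the comb with index `i`. -/
def tooth (i : Fin n) : Comb n := Sum.inr i

theorem spine_le_spine {i j : Fin n} : spine i ≤ spine j ↔ i ≤ j := Iff.rfl

theorem tooth_le_spine {i j : Fin n} : tooth i ≤ spine j ↔ i ≤ j := Iff.rfl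

theorem tooth_le_tooth {i j : Fin n} : tooth i ≤ tooth j ↔ i = j := Iff.rfl

theorem spine_inj {i j : Fin n} : spine i = spine j ↔ i = j := Sum.inl_injective.eq_iff

theorem tooth_inj {i j : Fin n} : tooth i = tooth j ↔ i = j := Sum.inr_injective.eq_iff

theorem spine_ne_tooth {i j : Fin n} : spine i ≠ tooth j := Sum.inl_ne_inr

theorem not_spine_le_tooth {i j : Fin n} : ¬ spine i ≤ tooth j := fun h => h

theorem cases_spine_tooth (a : Comb n) : (∃ i, a = spine i) ∨ ∃ i, a = tooth i := by
  cases a with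
  | inl i => exact Or.inl ⟨i, rfl⟩
  | inr i => exact Or.inr ⟨i, rfl⟩

end Comb

open Comb

/-! ### From a bi-p-morphism to an embedding -/

/-- Choosing preimages of the comb points downwards from the co-root, by the down condition, gives a
monotone section of `f`, which is an order-embedding because `f` is monotone. -/
theorem exists_embedding_of_map {n : ℕ} {X : Type*} [PartialOrder X]
    (f : X → Comb n) (hmono : Monotone f)
    (hdown : ∀ x v, v ≤ f x → ∃ z, z ≤ x ∧ f z = v) (hsurj : Function.Surjective f) :
    ∃ e : Comb n → X, ∀ a b : Comb n, a ≤ b ↔ e a ≤ e b := by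
  have spineLift : ∃ p : Fin n → X, (∀ i, f (p i) = spine i) ∧ Monotone p := by
    rcases Nat.eq_zero_or_pos n with rfl | hn
    · exact ⟨fun i => i.elim0, fun i => i.elim0, fun i => i.elim0⟩
    choose! d hd using hdown
    obtain ⟨r, hr⟩ := hsurj (spine ⟨n - 1, by omega⟩)
    -- `q k` lifts the spine point `k` steps below the co-root.
    let q : ℕ → X := fun k =>
      Nat.rec r (fun k y => d y (spine ⟨n - 1 - (k + 1), by omega⟩)) k
    have hq : ∀ k, f (q k) = spine ⟨n - 1 - k, by omega⟩ ∧ q (k + 1) ≤ q k := by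
      intro k
      induction k with
      | zero =>
        refine ⟨hr, (hd r _ ?_).1⟩
        rw [hr, spine_le_spine, Fin.mk_le_mk]
        omega
      | succ k ih =>
        have h1 : f (q (k + 1)) = spine ⟨n - 1 - (k + 1), by omega⟩ := by
          refine (hd (q k) _ ?_).2
          rw [ih.1, spine_le_spine, Fin.mk_le_mk]
          omega
        refine ⟨h1, (hd (q (k + 1)) _ ?_).1⟩
        rw [h1, spine_le_spine, Fin.mk_le_mk]
        omega
    refine ⟨fun i => q (n - 1 - i), fun i => ?_, fun i j hij => ?_⟩
    · rw [(hq _).1]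
      congr 1
      ext
      simp only
      omega
    · have : Antitone q := antitone_nat_of_succ_le fun k => (hq k).2
      apply this
      have : (i : ℕ) ≤ j := hij
      omega
  obtain ⟨p, hp, hpm⟩ := spineLift
  have toothLift : ∀ i, ∃ z, z ≤ p i ∧ f z = tooth i := fun i =>
    hdown _ _ (by rw [hp]; exact tooth_le_spine.2 le_rfl)
  choose t htp htf using toothLift
  let e : Comb n → X := Sum.elim p t
  have hfe : ∀ a, f (e a) = a := by
    intro a
    rcases cases_spine_tooth a with ⟨i, rfl⟩ | ⟨i, rfl⟩
    · exact hp i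
    · exact htf i
  refine ⟨e, fun a b => ⟨fun h => ?_, fun h => ?_⟩⟩
  · rcases cases_spine_tooth a with ⟨i, rfl⟩ | ⟨i, rfl⟩ <;>
      rcases cases_spine_tooth b with ⟨j, rfl⟩ | ⟨j, rfl⟩
    · exact hpm (spine_le_spine.1 h)
    · exact (not_spine_le_tooth h).elim
    · exact (htp i).trans (hpm (tooth_le_spine.1 h))
    · rw [tooth_le_tooth.1 h]
  · have := hmono h
    rwa [hfe, hfe] at this

/-! ### Compactness -/

section Compactness

variable {X : Type*} [TopologicalSpace X] [PartialOrder X]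

theorem isClosed_Ici_of_separation
    (hpsa : ∀ x y : X, ¬ x ≤ y → ∃ U : Set X, IsClopen U ∧ IsUpperSet U ∧ x ∈ U ∧ y ∉ U)
    (a : X) : IsClosed (Set.Ici a) := by
  rw [← isOpen_compl_iff, isOpen_iff_forall_mem_open]
  intro y hy
  obtain ⟨U, hU, hup, haU, hyU⟩ := hpsa a y hy
  exact ⟨Uᶜ, fun z hz haz => hz (hup haz haU), hU.compl.isOpen, hyU⟩

theorem isClosed_Iic_of_separation
    (hpsa : ∀ x y : X, ¬ x ≤ y → ∃ U : Set X, IsClopen U ∧ IsUpperSet U ∧ x ∈ U ∧ y ∉ U)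
    (a : X) : IsClosed (Set.Iic a) := by
  rw [← isOpen_compl_iff, isOpen_iff_forall_mem_open]
  intro y hy
  obtain ⟨U, hU, hup, hyU, haU⟩ := hpsa y a hy
  exact ⟨U, fun z hz hza => haU (hup hza hz), hU.isOpen, hyU⟩

/-- The common upper bounds of two points form a nonempty closed chain, which has a least element
by compactness. -/
theorem exists_join [CompactSpace X] [OrderTop X]
    (hpsa : ∀ x y : X, ¬ x ≤ y → ∃ U : Set X, IsClopen U ∧ IsUpperSet U ∧ x ∈ U ∧ y ∉ U)
    (hchain : ∀ x : X, IsChain (· ≤ ·) (Set.Ici x)) (a b : X) :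
    ∃ j, a ≤ j ∧ b ≤ j ∧ ∀ x, a ≤ x → b ≤ x → j ≤ x := by
  let K : Set X := Set.Ici a ∩ Set.Ici b
  have hK : IsClosed K :=
    (isClosed_Ici_of_separation hpsa a).inter (isClosed_Ici_of_separation hpsa b)
  have : Nonempty K := ⟨⟨⊤, le_top, le_top⟩⟩
  have hcl : ∀ x : K, IsClosed (K ∩ Set.Iic x.1) := fun x =>
    hK.inter (isClosed_Iic_of_separation hpsa x.1)
  obtain ⟨j, hj⟩ := IsCompact.nonempty_iInter_of_directed_nonempty_isCompact_isClosed
    (fun x : K => K ∩ Set.Iic x.1)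
    (by
      intro x y
      rcases (hchain a).total x.2.1 y.2.1 with h | h
      · exact ⟨x, subset_rfl, fun z hz => ⟨hz.1, hz.2.trans h⟩⟩
      · exact ⟨y, fun z hz => ⟨hz.1, hz.2.trans h⟩, subset_rfl⟩)
    (fun x => ⟨x.1, x.2, le_rfl⟩) (fun x => (hcl x).isCompact) hcl
  rw [Set.mem_iInter] at hj
  have hjK : j ∈ K := (hj (Classical.arbitrary K)).1
  exact ⟨j, hjK.1, hjK.2, fun x hx hx' => (hj ⟨x, hx, hx'⟩).2⟩

/-- Priestley separation of a point from a compact set containing no point above it. -/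
theorem exists_clopen_upper_of_compact
    (hpsa : ∀ x y : X, ¬ x ≤ y → ∃ U : Set X, IsClopen U ∧ IsUpperSet U ∧ x ∈ U ∧ y ∉ U)
    {K : Set X} (hK : IsCompact K) (a : X) (h : ∀ q ∈ K, ¬ a ≤ q) :
    ∃ G : Set X, IsClopen G ∧ IsUpperSet G ∧ a ∈ G ∧ ∀ q ∈ K, q ∉ G := by
  refine hK.induction_on
    (p := fun L => ∃ G : Set X, IsClopen G ∧ IsUpperSet G ∧ a ∈ G ∧ ∀ q ∈ L, q ∉ G) ?_ ?_ ?_ ?_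
  · exact ⟨Set.univ, isClopen_univ, isUpperSet_univ, trivial, fun q hq => hq.elim⟩
  · rintro s t hst ⟨G, h1, h2, h3, h4⟩
    exact ⟨G, h1, h2, h3, fun q hq => h4 q (hst hq)⟩
  · rintro s t ⟨G, h1, h2, h3, h4⟩ ⟨G', h1', h2', h3', h4'⟩
    refine ⟨G ∩ G', h1.inter h1', h2.inter h2', ⟨h3, h3'⟩, ?_⟩
    rintro q (hq | hq) hG
    · exact h4 q hq hG.1
    · exact h4' q hq hG.2
  · intro x hx
    obtain ⟨U, hU, hup, haU, hxU⟩ := hpsa a x (h x hx)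
    exact ⟨Uᶜ, mem_nhdsWithin_of_mem_nhds (hU.compl.isOpen.mem_nhds hxU), U, hU, hup, haU,
      fun q hq => hq⟩

end Compactness

/-! ### Filtrations and the maps they define -/

theorem mem_downClo_of_le {α : Type*} [Preorder α] {S : Set α} {x y : α} (hxy : x ≤ y)
    (hy : y ∈ downClo S) : x ∈ downClo S := by
  obtain ⟨s, hs, hys⟩ := hy
  exact ⟨s, hs, hxy.trans hys⟩

section Filtration

variable {X : Type*} [TopologicalSpace X] [PartialOrder X] [OrderTop X]

/-- A decreasing sequence of clopen upper sets encoding a continuous bi-p-morphism onto the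
`n`-comb. With indices starting at `0`, the set `F 0` is the preimage of the spine and
`F i \ F (i + 1)` that of the `i`-th spine point. -/
structure CombFiltration (n : ℕ) (F : ℕ → Set X) : Prop where
  isClopen : ∀ i, IsClopen (F i)
  isUpperSet : ∀ i, IsUpperSet (F i)
  antitone : Antitone F
  /-- As the `F i` are upper sets, this says that `F i` is empty exactly for `i ≥ n`. -/
  top_mem : ∀ i, ⊤ ∈ F i ↔ i < n
  /-- Down condition along the spine. -/
  exists_pred : ∀ i, ∀ x ∈ F (i + 1), ∃ z ≤ x, z ∈ F i ∧ z ∉ F (i + 1)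
  /-- Down condition from a spine point to its tooth: everything in the spine above `t` has index
  at least `i`. -/
  exists_tooth : ∀ i, ∀ x ∈ F i, ∃ t ≤ x, t ∉ F 0 ∧ ∀ s, t ≤ s → s ∈ F 0 → s ∈ F i
  /-- Up condition along the spine. -/
  exists_succ : ∀ i, ∀ x ∈ F i, x ∉ F (i + 1) → i + 1 < n →
    ∃ y, x ≤ y ∧ y ∈ F (i + 1) ∧ y ∉ F (i + 2)

namespace CombFiltration

variable {n : ℕ} {F : ℕ → Set X}

theorem notMem_of_le (hF : CombFiltration n F) {i : ℕ} (hi : n ≤ i) (x : X) : x ∉ F i := by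
  intro hx
  have := (hF.top_mem i).1 (hF.isUpperSet i le_top hx)
  omega

/-- Iterated up condition along the spine. -/
theorem exists_ge (hF : CombFiltration n F) {i j : ℕ} (hij : i ≤ j) (hj : j < n) {x : X}
    (hx : x ∈ F i) (hx' : x ∉ F (i + 1)) : ∃ y, x ≤ y ∧ y ∈ F j ∧ y ∉ F (j + 1) := by
  induction j, hij using Nat.le_induction with
  | base => exact ⟨x, le_rfl, hx, hx'⟩
  | succ j hij ih =>
    obtain ⟨y, hxy, hy, hy'⟩ := ih (by omega)
    obtain ⟨z, hyz, hz, hz'⟩ := hF.exists_succ j y hy hy' hj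
    exact ⟨z, hxy.trans hyz, hz, hz'⟩

/-- Iterated down condition along the spine. -/
theorem exists_le (hF : CombFiltration n F) {i j : ℕ} (hij : j ≤ i) {x : X}
    (hx : x ∈ F i) (hx' : x ∉ F (i + 1)) : ∃ y, y ≤ x ∧ y ∈ F j ∧ y ∉ F (j + 1) := by
  induction i, hij using Nat.le_induction generalizing x with
  | base => exact ⟨x, le_rfl, hx, hx'⟩
  | succ i hij ih =>
    obtain ⟨z, hzx, hz, hz'⟩ := hF.exists_pred i x hx
    obtain ⟨y, hyz, hy, hy'⟩ := ih hz hz'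
    exact ⟨y, hyz.trans hzx, hy, hy'⟩

/-- The lower set generated by the spine points of index at most `i`. -/
def lowerPart (F : ℕ → Set X) (i : ℕ) : Set X := downClo (F 0 \ F (i + 1))

theorem lowerPart_mono (hF : CombFiltration n F) {i j : ℕ} (hij : i ≤ j) :
    lowerPart F i ⊆ lowerPart F j := by
  rintro x ⟨s, hs, hxs⟩
  exact ⟨s, ⟨hs.1, fun h => hs.2 (hF.antitone (by omega) h)⟩, hxs⟩

theorem mem_lowerPart_iff (hF : CombFiltration n F) {i : ℕ} {x : X} (hx : x ∈ F 0) :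
    x ∈ lowerPart F i ↔ x ∉ F (i + 1) := by
  refine ⟨?_, fun h => ⟨x, ⟨hx, h⟩, le_rfl⟩⟩
  rintro ⟨s, hs, hxs⟩ h
  exact hs.2 (hF.isUpperSet _ hxs h)

theorem exists_mem_lowerPart (hF : CombFiltration n F) (hn : 1 ≤ n) (x : X) :
    ∃ i, i < n ∧ x ∈ lowerPart F i :=
  ⟨n - 1, by omega, ⊤, ⟨(hF.top_mem 0).2 hn, hF.notMem_of_le (by omega) _⟩, le_top⟩

/-- The index of the comb point to which `x` is sent: the least `i` such that `x` lies below a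
spine point of index at most `i`. For a `CombFiltration n F` with `n ≥ 1` the infimum is over a
nonempty set, by `exists_mem_lowerPart`. -/
noncomputable def rank (F : ℕ → Set X) (x : X) : ℕ := sInf {i | x ∈ lowerPart F i}

theorem rank_lt (hF : CombFiltration n F) (hn : 1 ≤ n) (x : X) : rank F x < n := by
  obtain ⟨i, hi, hx⟩ := hF.exists_mem_lowerPart hn x
  exact (Nat.sInf_le hx).trans_lt hi

theorem rank_le_iff (hF : CombFiltration n F) (hn : 1 ≤ n) (x : X) (i : ℕ) :
    rank F x ≤ i ↔ x ∈ lowerPart F i := by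
  obtain ⟨k, -, hk⟩ := hF.exists_mem_lowerPart hn x
  have hmem : x ∈ lowerPart F (rank F x) := Nat.sInf_mem (s := {i | x ∈ lowerPart F i}) ⟨k, hk⟩
  exact ⟨fun h => hF.lowerPart_mono h hmem, fun h => Nat.sInf_le h⟩

theorem rank_mono (hF : CombFiltration n F) (hn : 1 ≤ n) {x y : X} (hxy : x ≤ y) :
    rank F x ≤ rank F y := by
  rw [hF.rank_le_iff hn]
  exact mem_downClo_of_le hxy ((hF.rank_le_iff hn y _).1 le_rfl)

theorem rank_eq_of_mem (hF : CombFiltration n F) (hn : 1 ≤ n) {x : X} {i : ℕ} (hx : x ∈ F i)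
    (hx' : x ∉ F (i + 1)) : rank F x = i := by
  have hx0 : x ∈ F 0 := hF.antitone (Nat.zero_le i) hx
  refine le_antisymm ((hF.rank_le_iff hn x i).2 ((hF.mem_lowerPart_iff hx0).2 hx')) ?_
  by_contra! h
  refine (hF.mem_lowerPart_iff hx0).1 ((hF.rank_le_iff hn x _).1 le_rfl) ?_
  exact hF.antitone (by omega) hx

theorem mem_rank (hF : CombFiltration n F) (hn : 1 ≤ n) {x : X} (hx : x ∈ F 0) :
    x ∈ F (rank F x) ∧ x ∉ F (rank F x + 1) := by
  refine ⟨?_, (hF.mem_lowerPart_iff hx).1 ((hF.rank_le_iff hn x _).1 le_rfl)⟩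
  rcases h : rank F x with _ | k
  · exact hx
  · by_contra hk
    have := (hF.rank_le_iff hn x k).2 ((hF.mem_lowerPart_iff hx).2 hk)
    omega

theorem isClopen_rank_eq (hF : CombFiltration n F) (hn : 1 ≤ n)
    (hclo : ∀ U : Set X, IsClopen U → IsClopen (downClo U)) (i : ℕ) :
    IsClopen {x | rank F x = i} := by
  have hle : ∀ i, IsClopen {x | rank F x ≤ i} := fun i => by
    have : {x | rank F x ≤ i} = lowerPart F i := Set.ext fun x => hF.rank_le_iff hn x i
    rw [this]
    exact hclo _ ((hF.isClopen 0).diff (hF.isClopen _))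
  rcases i with _ | i
  · simpa using hle 0
  · have : {x | rank F x = i + 1} = {x | rank F x ≤ i + 1} \ {x | rank F x ≤ i} := by
      ext x
      simp only [Set.mem_ofPred_eq, Set.mem_sdiff]
      omega
    rw [this]
    exact (hle _).diff (hle _)

/-- A filtration defines a continuous surjective bi-p-morphism onto the comb: a point goes to the
spine or to the teeth according to its membership in `F 0`, with index given by its rank. -/
theorem exists_map (hF : CombFiltration n F) (hn : 1 ≤ n)
    (hclo : ∀ U : Set X, IsClopen U → IsClopen (downClo U))
    (hchain : ∀ x : X, IsChain (· ≤ ·) (Set.Ici x)) :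
    ∃ f : X → Comb n, Continuous f ∧ Monotone f ∧
      (∀ x u, f x ≤ u → ∃ y, x ≤ y ∧ f y = u) ∧
      (∀ x v, v ≤ f x → ∃ z, z ≤ x ∧ f z = v) ∧
      Function.Surjective f := by
  classical
  let r : X → Fin n := fun x => ⟨rank F x, hF.rank_lt hn x⟩
  let f : X → Comb n := fun x => if x ∈ F 0 then spine (r x) else tooth (r x)
  have f_mem : ∀ {x}, x ∈ F 0 → f x = spine (r x) := fun hx => if_pos hx
  have f_notMem : ∀ {x}, x ∉ F 0 → f x = tooth (r x) := fun hx => if_neg hx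
  have f_eq_spine : ∀ {x} {i : Fin n}, x ∈ F i → x ∉ F (i + 1) → f x = spine i := by
    intro x i hx hx'
    rw [f_mem (hF.antitone (Nat.zero_le _) hx)]
    congr 1
    exact Fin.ext (hF.rank_eq_of_mem hn hx hx')
  -- Every point lies below a spine point of the same rank.
  have exists_spine : ∀ x, ∃ s, x ≤ s ∧ s ∈ F (rank F x) ∧ s ∉ F (rank F x + 1) := by
    intro x
    obtain ⟨s, hs, hxs⟩ := (hF.rank_le_iff hn x _).1 le_rfl
    refine ⟨s, hxs, ?_, hs.2⟩
    have h1 := hF.rank_mono hn hxs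
    have h2 := (hF.rank_le_iff hn s _).2 ((hF.mem_lowerPart_iff hs.1).2 hs.2)
    have h3 := (hF.mem_rank hn hs.1).1
    rwa [le_antisymm h2 h1] at h3
  have down : ∀ x v, v ≤ f x → ∃ z, z ≤ x ∧ f z = v := by
    intro x v hv
    by_cases hx : x ∈ F 0
    · obtain ⟨h1, h2⟩ := hF.mem_rank hn hx
      rw [f_mem hx] at hv
      rcases cases_spine_tooth v with ⟨j, rfl⟩ | ⟨j, rfl⟩
      · obtain ⟨y, hyx, hy, hy'⟩ := hF.exists_le (spine_le_spine.1 hv : (j : ℕ) ≤ _) h1 h2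
        exact ⟨y, hyx, f_eq_spine hy hy'⟩
      · obtain ⟨y, hyx, hy, hy'⟩ := hF.exists_le (tooth_le_spine.1 hv : (j : ℕ) ≤ _) h1 h2
        obtain ⟨t, hty, ht, htF⟩ := hF.exists_tooth j y hy
        refine ⟨t, hty.trans hyx, ?_⟩
        rw [f_notMem ht]
        congr 1
        refine Fin.ext (le_antisymm ?_ ?_)
        · exact (hF.rank_mono hn hty).trans (hF.rank_eq_of_mem hn hy hy').le
        · obtain ⟨s, hts, hs, hs'⟩ := exists_spine t
          by_contra! h
          have h : rank F t < j := h
          exact hs' (hF.antitone h (htF s hts (hF.antitone (Nat.zero_le _) hs)))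
    · rw [f_notMem hx] at hv
      rcases cases_spine_tooth v with ⟨j, rfl⟩ | ⟨j, rfl⟩
      · exact (not_spine_le_tooth hv).elim
      · exact ⟨x, le_rfl, by rw [f_notMem hx, tooth_le_tooth.1 hv]⟩
  refine ⟨f, ?_, ?_, ?_, down, ?_⟩
  · rw [continuous_discrete_rng]
    intro b
    rcases cases_spine_tooth b with ⟨i, rfl⟩ | ⟨i, rfl⟩
    · have : f ⁻¹' {spine i} = F 0 ∩ {x | rank F x = i} := by
        ext x
        by_cases hx : x ∈ F 0
        · simp [f_mem hx, hx, spine_inj, r, Fin.ext_iff]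
        · simp [f_notMem hx, hx, spine_ne_tooth.symm]
      rw [this]
      exact ((hF.isClopen 0).inter (hF.isClopen_rank_eq hn hclo i)).isOpen
    · have : f ⁻¹' {tooth i} = {x | rank F x = i} \ F 0 := by
        ext x
        by_cases hx : x ∈ F 0
        · simp [f_mem hx, hx, spine_ne_tooth]
        · simp [f_notMem hx, hx, tooth_inj, r, Fin.ext_iff]
      rw [this]
      exact ((hF.isClopen_rank_eq hn hclo i).diff (hF.isClopen 0)).isOpen
  · intro x y hxy
    by_cases hx : x ∈ F 0
    · rw [f_mem hx, f_mem (hF.isUpperSet 0 hxy hx)]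
      exact spine_le_spine.2 (hF.rank_mono hn hxy)
    · rw [f_notMem hx]
      by_cases hy : y ∈ F 0
      · rw [f_mem hy]
        exact tooth_le_spine.2 (hF.rank_mono hn hxy)
      · rw [f_notMem hy]
        refine tooth_le_tooth.2 (Fin.ext (le_antisymm (hF.rank_mono hn hxy) ?_))
        -- A spine point above `x` is comparable with `y`, hence above it.
        obtain ⟨s, hxs, hs, hs'⟩ := exists_spine x
        have hs0 := hF.antitone (Nat.zero_le _) hs
        refine (hF.rank_le_iff hn y _).2 ⟨s, ⟨hs0, hs'⟩, ?_⟩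
        rcases (hchain x).total hxy hxs with h | h
        · exact h
        · exact (hy (hF.isUpperSet 0 h hs0)).elim
  · intro x u hu
    have up : ∀ j : Fin n, r x ≤ j → ∃ y, x ≤ y ∧ f y = spine j := by
      intro j hj
      obtain ⟨s, hxs, hs, hs'⟩ := exists_spine x
      obtain ⟨y, hsy, hy, hy'⟩ := hF.exists_ge (hj : rank F x ≤ j) j.2 hs hs'
      exact ⟨y, hxs.trans hsy, f_eq_spine hy hy'⟩
    by_cases hx : x ∈ F 0
    · rw [f_mem hx] at hu
      rcases cases_spine_tooth u with ⟨j, rfl⟩ | ⟨j, rfl⟩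
      · exact up j (spine_le_spine.1 hu)
      · exact (not_spine_le_tooth hu).elim
    · rw [f_notMem hx] at hu
      rcases cases_spine_tooth u with ⟨j, rfl⟩ | ⟨j, rfl⟩
      · exact up j (tooth_le_spine.1 hu)
      · exact ⟨x, le_rfl, by rw [f_notMem hx, tooth_le_tooth.1 hu]⟩
  · intro v
    have htop : f ⊤ = spine ⟨n - 1, by omega⟩ :=
      f_eq_spine ((hF.top_mem _).2 (by simp only; omega)) (hF.notMem_of_le (by simp only; omega) _)
    obtain ⟨z, -, hz⟩ := down ⊤ v (by
      rw [htop]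
      rcases cases_spine_tooth v with ⟨j, rfl⟩ | ⟨j, rfl⟩
      · exact spine_le_spine.2 (Fin.mk_le_mk.2 (by omega))
      · exact tooth_le_spine.2 (Fin.mk_le_mk.2 (by omega)))
    exact ⟨z, hz⟩

end CombFiltration

/-! ### Prepending a spine point to a filtration -/

/-- The filtration obtained from `F` by adding `W` below the spine as preimages of a new lowest
spine point. The old levels keep only the points above both `W` and `V`, where `V` consists of
points outside `F 0` meant to lie in the tooth of the previously lowest spine point; points of `F 0`
above `W` but not above `V` join the new lowest level. -/
def prepend (F : ℕ → Set X) (W V : Set X) : ℕ → Set X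
  | 0 => W ∪ (F 0 ∩ upClo W)
  | i + 1 => F i ∩ (upClo W ∩ upClo V)

namespace CombFiltration

variable {n : ℕ} {F : ℕ → Set X}

theorem prepend (hF : CombFiltration n F) (hn : 1 ≤ n) {W V : Set X}
    (hclo : ∀ U : Set X, IsClopen U → IsClopen (upClo U))
    (hchain : ∀ x : X, IsChain (· ≤ ·) (Set.Ici x))
    (hW : IsClopen W) (hV : IsClopen V) (hWne : W.Nonempty)
    (hWF : ∀ w ∈ W, w ∉ F 0)
    (hWspine : ∀ w ∈ W, ∃ z, w ≤ z ∧ z ∈ F 0 ∧ z ∉ F 1 ∧ z ∈ upClo V)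
    (hWup : ∀ w ∈ W, ∀ x, w ≤ x → x ∉ F 0 → x ∈ W)
    (hWtooth : ∀ w ∈ W, ∃ g ≤ w, g ∉ W)
    (hVF : ∀ t ∈ V, t ∉ F 0) (hVW : ∀ t ∈ V, ∀ w ∈ W, ¬ t ≤ w) :
    CombFiltration (n + 1) (_root_.prepend F W V) := by
  have upClo_mono : ∀ {S : Set X} {x y : X}, x ≤ y → x ∈ upClo S → y ∈ upClo S := by
    rintro S x y hxy ⟨s, hs, hsx⟩
    exact ⟨s, hs, hsx.trans hxy⟩
  -- From level `1` on, the points above `W` are automatically above `V`.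
  have above : ∀ x ∈ F 1, x ∈ upClo W →
      ∃ z, z ≤ x ∧ z ∈ F 0 ∧ z ∉ F 1 ∧ z ∈ upClo W ∧ z ∈ upClo V := by
    rintro x hx ⟨w, hw, hwx⟩
    obtain ⟨z, hwz, hz, hz', hzV⟩ := hWspine w hw
    refine ⟨z, ?_, hz, hz', ⟨w, hw, hwz⟩, hzV⟩
    rcases (hchain w).total hwz hwx with h | h
    · exact h
    · exact (hz' (hF.isUpperSet 1 h hx)).elim
  have hupper : ∀ i, IsUpperSet (_root_.prepend F W V i) := by
    rintro (_ | i) x y hxy hx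
    · have hxW : x ∈ upClo W := hx.elim (fun h => ⟨x, h, le_rfl⟩) (fun h => h.2)
      by_cases hy : y ∈ F 0
      · exact Or.inr ⟨hy, upClo_mono hxy hxW⟩
      · obtain ⟨w, hw, hwx⟩ := hxW
        exact Or.inl (hWup w hw y (hwx.trans hxy) hy)
    · exact ⟨hF.isUpperSet i hxy hx.1, upClo_mono hxy hx.2.1, upClo_mono hxy hx.2.2⟩
  refine ⟨?_, hupper, ?_, ?_, ?_, ?_, ?_⟩
  · rintro (_ | i)
    · exact hW.union ((hF.isClopen 0).inter (hclo W hW))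
    · exact (hF.isClopen i).inter ((hclo W hW).inter (hclo V hV))
  · refine antitone_nat_of_succ_le ?_
    rintro (_ | i) x hx
    · exact Or.inr ⟨hx.1, hx.2.1⟩
    · exact ⟨hF.antitone (Nat.le_succ i) hx.1, hx.2⟩
  · obtain ⟨w, hw⟩ := hWne
    have htop : (⊤ : X) ∈ upClo W := ⟨w, hw, le_top⟩
    rintro (_ | i)
    · exact ⟨fun _ => by omega, fun _ => Or.inr ⟨(hF.top_mem 0).2 hn, htop⟩⟩
    · obtain ⟨z, -, -, -, hz⟩ := hWspine w hw
      exact ⟨fun h => Nat.succ_lt_succ ((hF.top_mem i).1 h.1),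
        fun h => ⟨(hF.top_mem i).2 (Nat.lt_of_succ_lt_succ h), htop, upClo_mono le_top hz⟩⟩
  · rintro (_ | i) x ⟨hxF, hxW, hxV⟩
    · obtain ⟨w, hw, hwx⟩ := hxW
      exact ⟨w, hwx, Or.inl hw, fun h => hWF w hw h.1⟩
    · -- Going up from the point of `F 0 \ F 1` below `x`, the level `i` is reached below `x`.
      obtain ⟨z, hzx, hz, hz', hzW, hzV⟩ := above x (hF.antitone (by omega) hxF) hxW
      have hi : i + 1 < n := by
        by_contra! h
        exact hF.notMem_of_le h x hxF
      obtain ⟨y, hzy, hy, hy'⟩ := hF.exists_ge (Nat.zero_le i) (by omega) hz hz'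
      refine ⟨y, ?_, ⟨hy, upClo_mono hzy hzW, upClo_mono hzy hzV⟩, fun h => hy' h.1⟩
      rcases (hchain z).total hzy hzx with h | h
      · exact h
      · exact (hy' (hF.isUpperSet _ h hxF)).elim
  · rintro (_ | _ | i) x hx
    · have hxW : x ∈ upClo W := hx.elim (fun h => ⟨x, h, le_rfl⟩) (fun h => h.2)
      obtain ⟨w, hw, hwx⟩ := hxW
      obtain ⟨g, hgw, hg⟩ := hWtooth w hw
      refine ⟨g, hgw.trans hwx, ?_, fun s _ hs => hs⟩
      rintro (h | h)
      · exact hg h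
      · exact hWF w hw (hF.isUpperSet 0 hgw h.1)
    · obtain ⟨hxF, hxW, t, ht, htx⟩ := hx
      refine ⟨t, htx, ?_, ?_⟩
      · rintro (h | h)
        · exact hVW t ht t h le_rfl
        · exact hVF t ht h.1
      · rintro s hts (h | h)
        · exact (hVW t ht s h hts).elim
        · exact ⟨h.1, h.2, t, ht, hts⟩
    · obtain ⟨hxF, hxW, hxV⟩ := hx
      obtain ⟨t, htx, ht, htF⟩ := hF.exists_tooth (i + 1) x hxF
      have hF1 : ∀ s, t ≤ s → s ∈ F 0 → s ∈ F 1 := fun s hts hs =>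
        hF.antitone (by omega) (htF s hts hs)
      have htW : ∀ w ∈ W, ¬ t ≤ w := by
        intro w hw htw
        obtain ⟨z, hwz, hz, hz', -⟩ := hWspine w hw
        exact hz' (hF1 z (htw.trans hwz) hz)
      refine ⟨t, htx, ?_, ?_⟩
      · rintro (h | h)
        · exact htW t h le_rfl
        · exact ht h.1
      · rintro s hts (h | h)
        · exact (htW s h hts).elim
        · obtain ⟨z, hzs, -, -, -, hzV⟩ := above s (hF1 s hts h.1) h.2
          exact ⟨htF s hts h.1, h.2, upClo_mono hzs hzV⟩
  · rintro (_ | i) x hx hx' hi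
    · -- Both `W` and the points of `F 0 ∩ ↑W` not above `V` lie below a point of `F 0 \ F 1`
      -- which is above `V`.
      have hxW : x ∈ upClo W := hx.elim (fun h => ⟨x, h, le_rfl⟩) (fun h => h.2)
      obtain ⟨w, hw, hwx⟩ := hxW
      obtain ⟨z, hwz, hz, hz', hzV⟩ := hWspine w hw
      refine ⟨z, ?_, ⟨hz, ⟨w, hw, hwz⟩, hzV⟩, fun h => hz' h.1⟩
      rcases (hchain w).total hwx hwz with h | h
      · exact h
      · exact (hx' ⟨hF.isUpperSet 0 h hz, ⟨w, hw, hwx⟩, upClo_mono h hzV⟩).elim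
    · obtain ⟨y, hxy, hy, hy'⟩ := hF.exists_succ i x hx.1 (fun h => hx' ⟨h, hx.2⟩) (by omega)
      exact ⟨y, hxy, ⟨hy, upClo_mono hxy hx.2.1, upClo_mono hxy hx.2.2⟩, fun h => hy' h.1⟩

/-- Extension of a filtration by a spine point `a` with tooth `b`. Here `p` is a point of the
lowest level with tooth `t`, the points `a` and `t` have join `p`, and `c` is a further point
strictly below `a` to be kept off the spine. -/
theorem step [CompactSpace X] (hF : CombFiltration n F)
    (hclo : ∀ U : Set X, IsClopen U → IsClopen (upClo U) ∧ IsClopen (downClo U))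
    (hpsa : ∀ x y : X, ¬ x ≤ y → ∃ U : Set X, IsClopen U ∧ IsUpperSet U ∧ x ∈ U ∧ y ∉ U)
    (hchain : ∀ x : X, IsChain (· ≤ ·) (Set.Ici x)) {p t a b c : X}
    (hp : p ∈ F 0) (hp' : p ∉ F 1) (htp : t ≤ p) (ht : t ∉ F 0) (hap : a ≤ p) (ha : a ∉ F 0)
    (hjoin : ∀ x, a ≤ x → t ≤ x → p ≤ x) (hba : b ≤ a) (hab : ¬ a ≤ b) (hca : c ≤ a)
    (hac : ¬ a ≤ c) :
    ∃ F' : ℕ → Set X, CombFiltration (n + 1) F' ∧ a ∈ F' 0 ∧ a ∉ F' 1 ∧ b ∉ F' 0 ∧ c ∉ F' 0 := by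
  have hn : 1 ≤ n := (hF.top_mem 0).1 (hF.isUpperSet 0 le_top hp)
  have hK : IsCompact ((Set.Ici t \ F 0) ∪ {b, c}) := by
    refine IsCompact.union (IsClosed.isCompact ?_) (Set.toFinite _).isCompact
    exact (isClosed_Ici_of_separation hpsa t).inter (hF.isClopen 0).compl.isClosed
  obtain ⟨G, hG, hGup, haG, hGK⟩ := exists_clopen_upper_of_compact hpsa hK a (by
    rintro q (⟨htq, hq⟩ | rfl | rfl) haq
    · exact hq (hF.isUpperSet 0 (hjoin q haq htq) hp)
    · exact hab haq
    · exact hac haq)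
  have hbG : b ∉ G := hGK b (by simp)
  have hcG : c ∉ G := hGK c (by simp)
  let V : Set X := (F 0)ᶜ \ downClo ((F 0)ᶜ ∩ G)
  let W : Set X := ((F 0)ᶜ ∩ G) ∩ (upClo Gᶜ ∩ downClo ((F 0 \ F 1) ∩ upClo V))
  have hF0 := hF.isClopen 0
  have hV : IsClopen V := hF0.compl.diff (hclo _ (hF0.compl.inter hG)).2
  have hW : IsClopen W := (hF0.compl.inter hG).inter
    ((hclo _ hG.compl).1.inter (hclo _ ((hF0.diff (hF.isClopen 1)).inter (hclo _ hV).1)).2)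
  have htV : t ∈ V := by
    refine ⟨ht, ?_⟩
    rintro ⟨s, ⟨hsF, hsG⟩, hts⟩
    exact hGK s (Or.inl ⟨hts, hsF⟩) hsG
  have haW : a ∈ W := ⟨⟨ha, haG⟩, ⟨b, hbG, hba⟩, p, ⟨⟨hp, hp'⟩, t, htV, htp⟩, hap⟩
  have notMem : ∀ x, x ≤ a → x ∉ G → x ∉ _root_.prepend F W V 0 := by
    rintro x hxa hxG (h | h)
    · exact hxG h.1.2
    · exact ha (hF.isUpperSet 0 hxa h.1)
  refine ⟨_root_.prepend F W V, hF.prepend hn (fun U hU => (hclo U hU).1) hchain hW hV ⟨a, haW⟩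
    (fun w hw => hw.1.1) ?_ ?_ ?_ (fun s hs => hs.1) ?_, Or.inl haW, fun h => ha h.1,
    notMem b hba hbG, notMem c hca hcG⟩
  · rintro w ⟨-, -, z, ⟨hz, hzV⟩, hwz⟩
    exact ⟨z, hwz, hz.1, hz.2, hzV⟩
  · rintro w ⟨⟨-, hwG⟩, ⟨g, hg, hgw⟩, z, hz, hwz⟩ x hwx hx
    refine ⟨⟨hx, hGup hwx hwG⟩, ⟨g, hg, hgw.trans hwx⟩, z, hz, ?_⟩
    rcases (hchain w).total hwx hwz with h | h
    · exact h
    · exact (hx (hF.isUpperSet 0 h hz.1.1)).elim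
  · rintro w ⟨-, ⟨g, hg, hgw⟩, -⟩
    exact ⟨g, hgw, fun h => hg h.1.2⟩
  · exact fun s hs w hw hsw => hs.2 ⟨w, hw.1, hsw⟩

/-- A spine point `a` with tooth `b` gives a filtration for the comb with one tooth, with a further
point `c` not above `a` kept off the spine. -/
theorem exists_base
    (hclo : ∀ U : Set X, IsClopen U → IsClopen (upClo U))
    (hpsa : ∀ x y : X, ¬ x ≤ y → ∃ U : Set X, IsClopen U ∧ IsUpperSet U ∧ x ∈ U ∧ y ∉ U)
    {a b c : X} (hba : b ≤ a) (hab : ¬ a ≤ b) (hac : ¬ a ≤ c) :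
    ∃ F' : ℕ → Set X, CombFiltration 1 F' ∧ a ∈ F' 0 ∧ a ∉ F' 1 ∧ b ∉ F' 0 ∧ c ∉ F' 0 := by
  obtain ⟨G, hG, hGup, haG, hGK⟩ := exists_clopen_upper_of_compact hpsa
    (Set.toFinite {b, c}).isCompact a (by
      rintro q (rfl | rfl)
      · exact hab
      · exact hac)
  have hbG : b ∉ G := hGK b (by simp)
  have hcG : c ∉ G := hGK c (by simp)
  let F' : ℕ → Set X := fun i => if i = 0 then G ∩ upClo Gᶜ else ∅
  have h0 : F' 0 = G ∩ upClo Gᶜ := rfl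
  have h1 : ∀ i, F' (i + 1) = ∅ := fun i => rfl
  have haF : a ∈ F' 0 := ⟨haG, b, hbG, hba⟩
  have hupper : ∀ i, IsUpperSet (F' i) := by
    rintro (_ | i) x y hxy hx
    · obtain ⟨hxG, g, hg, hgx⟩ := hx
      exact ⟨hGup hxy hxG, g, hg, hgx.trans hxy⟩
    · exact hx.elim
  refine ⟨F', ⟨?_, hupper, ?_, ?_, ?_, ?_, ?_⟩, haF, fun h => h.elim, fun h => hbG h.1,
    fun h => hcG h.1⟩
  · rintro (_ | i)
    · exact hG.inter (hclo _ hG.compl)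
    · exact isClopen_empty
  · exact antitone_nat_of_succ_le fun i x hx => hx.elim
  · rintro (_ | i)
    · exact ⟨fun _ => one_pos, fun _ => hupper 0 le_top haF⟩
    · exact ⟨fun h => h.elim, fun h => by omega⟩
  · exact fun i x hx => hx.elim
  · rintro (_ | i) x hx
    · obtain ⟨hxG, g, hg, hgx⟩ := hx
      exact ⟨g, hgx, fun h => hg h.1, fun s _ hs => hs⟩
    · exact hx.elim
  · intro i x _ _ hi
    omega

end CombFiltration

/-! ### From an embedding to a filtration -/

/-- A comb with spine `p`, teeth `v` and `p (i + 1)` the join of `p i` and `v (i + 1)` gives a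
filtration. By induction on `m`, the top `m + 1` spine points do so; the clause on `c` keeps the
next spine point off the spine of the filtration. -/
theorem exists_filtration [CompactSpace X]
    (hclo : ∀ U : Set X, IsClopen U → IsClopen (upClo U) ∧ IsClopen (downClo U))
    (hpsa : ∀ x y : X, ¬ x ≤ y → ∃ U : Set X, IsClopen U ∧ IsUpperSet U ∧ x ∈ U ∧ y ∉ U)
    (hchain : ∀ x : X, IsChain (· ≤ ·) (Set.Ici x)) {n : ℕ} (p v : ℕ → X)
    (hvp : ∀ i < n, v i ≤ p i) (hpv : ∀ i < n, ¬ p i ≤ v i)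
    (hpp : ∀ i, i + 1 < n → p i ≤ p (i + 1)) (hvp' : ∀ i, i + 1 < n → ¬ v (i + 1) ≤ p i)
    (hjoin : ∀ i, i + 1 < n → ∀ x, p i ≤ x → v (i + 1) ≤ x → p (i + 1) ≤ x)
    (m i : ℕ) (hm : i + m + 1 = n) (c : X) (hc : c ≤ p i) (hc' : ¬ p i ≤ c) :
    ∃ F : ℕ → Set X, CombFiltration (m + 1) F ∧ p i ∈ F 0 ∧ p i ∉ F 1 ∧ v i ∉ F 0 ∧ c ∉ F 0 := by
  induction m generalizing i c with
  | zero =>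
    exact CombFiltration.exists_base (fun U hU => (hclo U hU).1) hpsa (hvp i (by omega))
      (hpv i (by omega)) hc'
  | succ m ih =>
    obtain ⟨F, hF, h1, h2, h3, h4⟩ := ih (i + 1) (by omega) (p i) (hpp i (by omega))
      fun h => hvp' i (by omega) ((hvp (i + 1) (by omega)).trans h)
    exact hF.step hclo hpsa hchain h1 h2 (hvp (i + 1) (by omega)) h3 (hpp i (by omega)) h4
      (hjoin i (by omega)) (hvp i (by omega)) (hpv i (by omega)) hc hc'

/-- Replacing the spine points of an embedded comb by successive joins with the teeth gives a comb
to which `exists_filtration` applies. -/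
theorem exists_filtration_of_embedding [CompactSpace X]
    (hclo : ∀ U : Set X, IsClopen U → IsClopen (upClo U) ∧ IsClopen (downClo U))
    (hpsa : ∀ x y : X, ¬ x ≤ y → ∃ U : Set X, IsClopen U ∧ IsUpperSet U ∧ x ∈ U ∧ y ∉ U)
    (hchain : ∀ x : X, IsChain (· ≤ ·) (Set.Ici x)) {n : ℕ} (hn : 1 ≤ n)
    (e : Comb n → X) (he : ∀ a b : Comb n, a ≤ b ↔ e a ≤ e b) :
    ∃ F : ℕ → Set X, CombFiltration n F := by
  choose j hj₁ hj₂ hj using exists_join hpsa hchain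
  -- The values at indices at least `n` are irrelevant.
  let v : ℕ → X := fun i => if h : i < n then e (tooth ⟨i, h⟩) else ⊤
  have hv : ∀ i (h : i < n), v i = e (tooth ⟨i, h⟩) := fun i h => dif_pos h
  let p : ℕ → X := fun i => Nat.rec (e (spine ⟨0, hn⟩)) (fun i q => j q (v (i + 1))) i
  have hp0 : p 0 = e (spine ⟨0, hn⟩) := rfl
  have hpsucc : ∀ i, p (i + 1) = j (p i) (v (i + 1)) := fun i => rfl
  have hpp : ∀ i, p i ≤ p (i + 1) := fun i => hj₁ _ _
  have hpe : ∀ i (h : i < n), p i ≤ e (spine ⟨i, h⟩) := by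
    intro i
    induction i with
    | zero => exact fun h => le_rfl
    | succ i ih =>
      intro h
      refine hj _ _ _ ((ih (by omega)).trans ((he _ _).1 (spine_le_spine.2 ?_))) ?_
      · exact Fin.mk_le_mk.2 (Nat.le_succ i)
      · rw [hv _ h]
        exact (he _ _).1 (tooth_le_spine.2 le_rfl)
  have hvp : ∀ i < n, v i ≤ p i := by
    rintro (_ | i) h
    · rw [hv 0 h]
      exact (he _ _).1 (tooth_le_spine.2 le_rfl)
    · exact hj₂ _ _
  have hpv : ∀ i < n, ¬ p i ≤ v i := by
    intro i h hle
    rw [hv i h] at hle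
    have h0 : p 0 ≤ p i := monotone_nat_of_le_succ hpp (Nat.zero_le i)
    exact not_spine_le_tooth ((he _ _).2 (h0.trans hle))
  have hvp' : ∀ i, i + 1 < n → ¬ v (i + 1) ≤ p i := by
    intro i h hle
    rw [hv _ h] at hle
    have := tooth_le_spine.1 ((he _ _).2 (hle.trans (hpe i (by omega))))
    exact absurd (Fin.mk_le_mk.1 this) (by omega)
  obtain ⟨F, hF, -⟩ := exists_filtration hclo hpsa hchain p v hvp hpv (fun i _ => hpp i) hvp'
    (fun i _ => hj _ _) (n - 1) 0 (by omega) (v 0) (hvp 0 hn) (hpv 0 hn)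
  exact ⟨F, by rwa [Nat.sub_add_cancel hn] at hF⟩

end Filtration

/-- Let `n ≥ 1` and `X` a bi-Esakia co-tree.  Then the `n`-comb `C_n`
order-embeds into `X` iff there is a surjective continuous bi-p-morphism from `X` onto
`C_n` (with the discrete topology). -/
theorem comb_orderEmbeds_iff_morphicImage
    (n : ℕ) (hn : 1 ≤ n)
    {X : Type*} [TopologicalSpace X] [PartialOrder X] [CompactSpace X] [OrderTop X]
    (hclo : ∀ U : Set X, IsClopen U → IsClopen (upClo U) ∧ IsClopen (downClo U))
    (hpsa : ∀ x y : X, ¬ x ≤ y → ∃ U : Set X, IsClopen U ∧ IsUpperSet U ∧ x ∈ U ∧ y ∉ U)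
    (hchain : ∀ x : X, IsChain (· ≤ ·) (Set.Ici x)) :
    (∃ e : Comb n → X, ∀ a b : Comb n, a ≤ b ↔ e a ≤ e b) ↔
    (∃ f : X → Comb n, Continuous f ∧ Monotone f ∧
      (∀ x u, f x ≤ u → ∃ y, x ≤ y ∧ f y = u) ∧
      (∀ x v, v ≤ f x → ∃ z, z ≤ x ∧ f z = v) ∧
      Function.Surjective f) := by
  constructor
  · rintro ⟨e, he⟩
    obtain ⟨F, hF⟩ := exists_filtration_of_embedding hclo hpsa hchain hn e he
    exact hF.exists_map hn (fun U hU => (hclo U hU).2) hchain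
  · rintro ⟨f, -, hmono, -, hdown, hsurj⟩
    exact exists_embedding_of_map f hmono hdown hsurj
end

section
/- Let X be a bi-Esakia space and E a bi-bisimulation equivalence on X. If x ≤ y ≤ z in X and (x, z) ∈ E, then (x, y) ∈ E. -/
/-- Let `X` be a bi-Esakia space and `E` a bi-bisimulation equivalence on
`X`.  If `x ≤ y ≤ z` and `E x z`, then `E x y`. -/
theorem biBisim_of_between
    {X : Type*} [TopologicalSpace X] [PartialOrder X] [CompactSpace X]
    (hclo : ∀ U : Set X, IsClopen U → IsClopen (upClo U) ∧ IsClopen (downClo U))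
    (hpsa : ∀ x y : X, ¬ x ≤ y → ∃ U : Set X, IsClopen U ∧ IsUpperSet U ∧ x ∈ U ∧ y ∉ U)
    (E : X → X → Prop)
    (hEquiv : Equivalence E)
    (hup : ∀ w w' v', E w w' → w' ≤ v' → ∃ v, E v v' ∧ w ≤ v)
    (hdown : ∀ w w' u', E w w' → u' ≤ w' → ∃ u, E u u' ∧ u ≤ w)
    (hrefined : ∀ w v, ¬ E w v → ∃ U : Set X,
        IsClopen U ∧ IsUpperSet U ∧ {x | ∃ u ∈ U, E u x} = U ∧ Xor' (w ∈ U) (v ∈ U))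
    {x y z : X} (hxy : x ≤ y) (hyz : y ≤ z) (hE : E x z) :
    E x y := by
  by_contra hne
  obtain ⟨U, -, hUpper, hSat, ⟨hx, hy⟩ | ⟨hy, hx⟩⟩ := hrefined x y hne
  · exact hy (hUpper hxy hx)
  · -- `z ∈ U` as `U` is an upper set, so `x ∈ U` as `U` is `E`-saturated.
    exact hx (hSat ▸ ⟨z, hUpper hyz hy, hEquiv.symm hE⟩)
end

section
/- Let X be a bi-Esakia space and H ⊆ X an isolated chain. Then the least equivalence relation identifying all points of H, namely E := (H × H) ∪ Id_X, is a bi-bisimulation equivalence on X. -/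
/-- An upper set containing the least element `m0` of `H`, or missing its greatest element `m1`,
is saturated for the equivalence relation collapsing `H`. -/
theorem saturated_of_isUpperSet {X : Type*} [PartialOrder X] {H : Set X} {m0 m1 : X}
    (hleast : ∀ h ∈ H, m0 ≤ h) (hgreatest : ∀ h ∈ H, h ≤ m1)
    {U : Set X} (hU : IsUpperSet U) (h : m0 ∈ U ∨ m1 ∉ U) :
    {x | ∃ u ∈ U, (u ∈ H ∧ x ∈ H) ∨ u = x} = U := by
  ext x
  constructor
  · rintro ⟨u, hu, ⟨huH, hxH⟩ | rfl⟩
    · rcases h with h | h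
      · exact hU (hleast x hxH) h
      · exact absurd (hU (hgreatest u huH) hu) h
    · exact hu
  · exact fun hx => ⟨x, hx, Or.inr rfl⟩

theorem exists_saturated_of_not_le {X : Type*} [TopologicalSpace X] [PartialOrder X]
    (hpsa : ∀ x y : X, ¬ x ≤ y → ∃ U : Set X, IsClopen U ∧ IsUpperSet U ∧ x ∈ U ∧ y ∉ U)
    {H : Set X} {m0 m1 : X}
    (hleast : ∀ h ∈ H, m0 ≤ h) (hgreatest : ∀ h ∈ H, h ≤ m1)
    (habove : ∀ x, x ∉ H → m0 ≤ x → m1 ≤ x) (hbelow : ∀ x, x ∉ H → x ≤ m1 → x ≤ m0)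
    {w v : X} (hE : ¬ (w ∈ H ∧ v ∈ H)) (hwv : ¬ w ≤ v) :
    ∃ U : Set X, IsClopen U ∧ IsUpperSet U ∧
      {x | ∃ u ∈ U, (u ∈ H ∧ x ∈ H) ∨ u = x} = U ∧ w ∈ U ∧ v ∉ U := by
  obtain ⟨U, hUc, hUu, hwU, hvU⟩ := hpsa w v hwv
  by_cases hv : m0 ≤ v
  · by_cases hvH : v ∈ H
    · -- `w` is outside `H` and not below `v`, hence not below `m1`: separate it from `m1`.
      have hwm : ¬ w ≤ m1 := fun h =>
        hwv ((hbelow w (fun hw => hE ⟨hw, hvH⟩) h).trans hv)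
      obtain ⟨V, hVc, hVu, hwV, hmV⟩ := hpsa w m1 hwm
      exact ⟨V, hVc, hVu, saturated_of_isUpperSet hleast hgreatest hVu (Or.inr hmV), hwV,
        fun h => hmV (hVu (hgreatest v hvH) h)⟩
    · -- Here `m1 ≤ v`, so any upper set missing `v` misses `m1`.
      exact ⟨U, hUc, hUu, saturated_of_isUpperSet hleast hgreatest hUu
        (Or.inr fun h => hvU (hUu (habove v hvH hv) h)), hwU, hvU⟩
  · -- Enlarge `U` by a clopen upper set that contains `m0` and still misses `v`.
    obtain ⟨V, hVc, hVu, hmV, hvV⟩ := hpsa m0 v hv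
    exact ⟨U ∪ V, hUc.union hVc, hUu.union hVu,
      saturated_of_isUpperSet hleast hgreatest (hUu.union hVu) (Or.inl (Or.inr hmV)),
      Or.inl hwU, fun h => h.elim hvU hvV⟩

/-- Let `X` be a bi-Esakia space and `H ⊆ X` an isolated chain, with least
element `m0` and greatest element `m1`.  Then the least equivalence relation identifying all
points of `H`, namely `E x y := (x ∈ H ∧ y ∈ H) ∨ x = y`, is a bi-bisimulation equivalence
on `X` (an equivalence relation satisfying the up, down and refined conditions). -/
theorem isolatedChain_biBisim
    {X : Type*} [TopologicalSpace X] [PartialOrder X] [CompactSpace X]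
    (hclo : ∀ U : Set X, IsClopen U → IsClopen (upClo U) ∧ IsClopen (downClo U))
    (hpsa : ∀ x y : X, ¬ x ≤ y → ∃ U : Set X, IsClopen U ∧ IsUpperSet U ∧ x ∈ U ∧ y ∉ U)
    (H : Set X) (m0 m1 : X)
    (hm0 : m0 ∈ H) (hm1 : m1 ∈ H)
    (hleast : ∀ h ∈ H, m0 ≤ h) (hgreatest : ∀ h ∈ H, h ≤ m1)
    (hchainH : IsChain (· ≤ ·) H)
    (hiso1 : downClo {m1} \ H = downClo {m0} \ {m0})
    (hiso2 : upClo {m0} \ H = upClo {m1} \ {m1}) :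
    Equivalence (fun x y : X => (x ∈ H ∧ y ∈ H) ∨ x = y) ∧
    (∀ w w' v' : X, ((w ∈ H ∧ w' ∈ H) ∨ w = w') → w' ≤ v' →
        ∃ v, ((v ∈ H ∧ v' ∈ H) ∨ v = v') ∧ w ≤ v) ∧
    (∀ w w' u' : X, ((w ∈ H ∧ w' ∈ H) ∨ w = w') → u' ≤ w' →
        ∃ u, ((u ∈ H ∧ u' ∈ H) ∨ u = u') ∧ u ≤ w) ∧
    (∀ w v : X, ¬ ((w ∈ H ∧ v ∈ H) ∨ w = v) →
        ∃ U : Set X, IsClopen U ∧ IsUpperSet U ∧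
          {x | ∃ u ∈ U, (u ∈ H ∧ x ∈ H) ∨ u = x} = U ∧ Xor' (w ∈ U) (v ∈ U)) := by
  have habove : ∀ x, x ∉ H → m0 ≤ x → m1 ≤ x := by
    intro x hx h
    have hx' : x ∈ upClo {m1} \ {m1} := hiso2 ▸ ⟨⟨m0, rfl, h⟩, hx⟩
    obtain ⟨⟨s, rfl, hs⟩, -⟩ := hx'
    exact hs
  have hbelow : ∀ x, x ∉ H → x ≤ m1 → x ≤ m0 := by
    intro x hx h
    have hx' : x ∈ downClo {m0} \ {m0} := hiso1 ▸ ⟨⟨m1, rfl, h⟩, hx⟩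
    obtain ⟨⟨s, rfl, hs⟩, -⟩ := hx'
    exact hs
  refine ⟨⟨fun x => Or.inr rfl, ?_, ?_⟩, ?_, ?_, ?_⟩
  · rintro x y (⟨hx, hy⟩ | rfl)
    · exact Or.inl ⟨hy, hx⟩
    · exact Or.inr rfl
  · rintro x y z (⟨hx, hy⟩ | rfl) (⟨hy', hz⟩ | rfl)
    · exact Or.inl ⟨hx, hz⟩
    · exact Or.inl ⟨hx, hy⟩
    · exact Or.inl ⟨hy', hz⟩
    · exact Or.inr rfl
  · rintro w w' v' (⟨hw, hw'⟩ | rfl) hle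
    · by_cases hv : v' ∈ H
      · exact ⟨w, Or.inl ⟨hw, hv⟩, le_rfl⟩
      · exact ⟨v', Or.inr rfl,
          (hgreatest w hw).trans (habove v' hv ((hleast w' hw').trans hle))⟩
    · exact ⟨v', Or.inr rfl, hle⟩
  · rintro w w' u' (⟨hw, hw'⟩ | rfl) hle
    · by_cases hu : u' ∈ H
      · exact ⟨w, Or.inl ⟨hw, hu⟩, le_rfl⟩
      · exact ⟨u', Or.inr rfl,
          (hbelow u' hu (hle.trans (hgreatest w' hw'))).trans (hleast w hw)⟩
    · exact ⟨u', Or.inr rfl, hle⟩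
  · intro w v hE
    by_cases hwv : w ≤ v
    · have hvw : ¬ v ≤ w := fun h => hE (Or.inr (le_antisymm hwv h))
      obtain ⟨U, hc, hu, hs, hvU, hwU⟩ := exists_saturated_of_not_le hpsa hleast hgreatest
        habove hbelow (fun h => hE (Or.inl h.symm)) hvw
      exact ⟨U, hc, hu, hs, Or.inr ⟨hvU, hwU⟩⟩
    · obtain ⟨U, hc, hu, hs, hwU, hvU⟩ := exists_saturated_of_not_le hpsa hleast hgreatest
        habove hbelow (fun h => hE (Or.inl h)) hwv
      exact ⟨U, hc, hu, hs, Or.inl ⟨hwU, hvU⟩⟩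
end

section
/- Let X be a bi-Esakia co-forest and let w, v be two distinct points of X that have a common immediate successor (there is u with u covering both w and v). Suppose the principal downsets ↓w and ↓v are finite and there exists an order-isomorphism f : ↓w → ↓v. Then the relation E := {(x,y) : (x ∈ ↓w and f(x) = y) or (x ∈ ↓v and f(y) = x)} ∪ Id_X is a bi-bisimulation equivalence on X. -/
/-!
Since `u` covers both `w` and `v`, these points are incomparable, and as principal upsets are chains
the downsets `↓w` and `↓v` are disjoint. So `E` is the equivalence gluing each point of `↓w` to its
image under `f`, and every class is an antichain. The down condition follows because `f` is an
order-isomorphism of downsets. For the up condition, a point above some point of `↓v` either lies in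
`↓v`, where `f` transports it, or lies above `v`, hence above `u` and so above all of `↓w`.

For the refined condition, the relation "some point `E`-equivalent to `x` lies below `y`" is
antisymmetric modulo `E` (`glued_antisymm`), so for inequivalent `a`, `b` one may assume that no
point equivalent to `a` is below `b`. The finite set `↓w ∪ ↓v ∪ {a, b}` contains every nontrivial
class, and its points above some member of the class of `a` form a relative upset containing `a` but
not `b`, which is saturated by the down condition. Finitely many Priestley separations extend this
relative upset to a clopen upset of `X` with the same trace on the finite set
(`exists_clopen_upper_trace`); off that set `E` is the identity, so the extension is saturated.
-/

/-- In a Priestley-separated space, every relative upset of a finite set is the trace of a clopen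
upset. -/
lemma exists_clopen_upper_trace {X : Type*} [TopologicalSpace X] [PartialOrder X]
    (hpsa : ∀ x y : X, ¬ x ≤ y → ∃ U : Set X, IsClopen U ∧ IsUpperSet U ∧ x ∈ U ∧ y ∉ U)
    {F : Set X} (hF : F.Finite) (P : X → Prop)
    (hP : ∀ x ∈ F, ∀ y ∈ F, P x → x ≤ y → P y) :
    ∃ U : Set X, IsClopen U ∧ IsUpperSet U ∧ ∀ x ∈ F, (x ∈ U ↔ P x) := by
  choose! V hVc hVu hVx hVy using hpsa
  have hA : {x ∈ F | P x}.Finite := hF.subset fun _ h => h.1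
  have hB : {x ∈ F | ¬ P x}.Finite := hF.subset fun _ h => h.1
  have hn : ∀ x ∈ {x ∈ F | P x}, ∀ y ∈ {x ∈ F | ¬ P x}, ¬ x ≤ y :=
    fun x hx y hy hxy => hy.2 (hP x hx.1 y hy.1 hx.2 hxy)
  refine ⟨⋃ x ∈ {x ∈ F | P x}, ⋂ y ∈ {x ∈ F | ¬ P x}, V x y, ?_, ?_, ?_⟩
  · exact hA.isClopen_biUnion fun x hx => hB.isClopen_biInter fun y hy => hVc x y (hn x hx y hy)
  · exact isUpperSet_iUnion₂ fun x hx => isUpperSet_iInter₂ fun y hy => hVu x y (hn x hx y hy)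
  · intro z hz
    simp only [Set.mem_iUnion, Set.mem_iInter]
    constructor
    · rintro ⟨x, hx, h⟩
      by_contra hPz
      exact hVy x z (hn x hx z ⟨hz, hPz⟩) (h z ⟨hz, hPz⟩)
    · intro hPz
      exact ⟨z, ⟨hz, hPz⟩, fun y hy => hVx z y (hn z ⟨hz, hPz⟩ y hy)⟩

/-- For an equivalence whose classes are antichains and which satisfies the down condition, the
induced relation on classes is antisymmetric. -/
lemma glued_antisymm {X : Type*} [PartialOrder X] {E : X → X → Prop} (hE : Equivalence E)
    (hdown : ∀ a a' c' : X, E a a' → c' ≤ a' → ∃ c, E c c' ∧ c ≤ a)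
    (hanti : ∀ x y, E x y → x ≤ y → x = y) {a b : X}
    (hab : ∃ a', E a' a ∧ a' ≤ b) (hba : ∃ b', E b' b ∧ b' ≤ a) : E a b := by
  obtain ⟨a', ha, hab⟩ := hab
  obtain ⟨b', hb, hba⟩ := hba
  obtain ⟨c, hc, hca⟩ := hdown a' a b' ha hba
  have hcb : c = b := hanti c b (hE.trans hc hb) (hca.trans hab)
  have : a' = b := le_antisymm hab (hcb ▸ hca)
  exact hE.symm (this ▸ ha)

/-- The refined condition holds for an equivalence with antichain classes that satisfies the
down condition and is the identity off a finite set `G`. -/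
lemma refined_of_finite {X : Type*} [TopologicalSpace X] [PartialOrder X]
    (hpsa : ∀ x y : X, ¬ x ≤ y → ∃ U : Set X, IsClopen U ∧ IsUpperSet U ∧ x ∈ U ∧ y ∉ U)
    {E : X → X → Prop} (hE : Equivalence E)
    (hdown : ∀ a a' c' : X, E a a' → c' ≤ a' → ∃ c, E c c' ∧ c ≤ a)
    (hanti : ∀ x y, E x y → x ≤ y → x = y)
    {G : Set X} (hG : G.Finite) (hEG : ∀ x y, E x y → x = y ∨ (x ∈ G ∧ y ∈ G))
    (a b : X) (hab : ¬ E a b) :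
    ∃ U : Set X, IsClopen U ∧ IsUpperSet U ∧ {x | ∃ t ∈ U, E t x} = U ∧ Xor' (a ∈ U) (b ∈ U) := by
  have key : ∀ a b : X, (¬ ∃ a', E a' a ∧ a' ≤ b) →
      ∃ U : Set X, IsClopen U ∧ IsUpperSet U ∧ {x | ∃ t ∈ U, E t x} = U ∧ a ∈ U ∧ b ∉ U := by
    intro a b hn
    obtain ⟨U, hUc, hUu, hU⟩ := exists_clopen_upper_trace hpsa
      (hG.union (Set.toFinite {a, b})) (fun y => ∃ a', E a' a ∧ a' ≤ y)
      (fun x _ y _ ⟨a', h, h'⟩ hxy => ⟨a', h, h'.trans hxy⟩)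
    refine ⟨U, hUc, hUu, ?_, (hU a (by simp)).2 ⟨a, hE.refl a, le_rfl⟩,
      fun hb => hn ((hU b (by simp)).1 hb)⟩
    ext x
    refine ⟨?_, fun hx => ⟨x, hx, hE.refl x⟩⟩
    rintro ⟨t, ht, htx⟩
    rcases hEG t x htx with rfl | ⟨htG, hxG⟩
    · exact ht
    · obtain ⟨a', ha, hat⟩ := (hU t (Or.inl htG)).1 ht
      -- The down condition moves the witness below `t` to an equivalent one below `x`.
      obtain ⟨a'', ha', hax⟩ := hdown x t a' (hE.symm htx) hat
      exact (hU x (Or.inl hxG)).2 ⟨a'', hE.trans ha' ha, hax⟩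
  by_cases h : ∃ a', E a' a ∧ a' ≤ b
  · obtain ⟨U, h1, h2, h3, h4, h5⟩ := key b a fun h' => hab (glued_antisymm hE hdown hanti h h')
    exact ⟨U, h1, h2, h3, Or.inr ⟨h4, h5⟩⟩
  · obtain ⟨U, h1, h2, h3, h4, h5⟩ := key a b h
    exact ⟨U, h1, h2, h3, Or.inl ⟨h4, h5⟩⟩


/-- Let `X` be a bi-Esakia co-forest and `w ≠ v` two points with a common
immediate successor `u`.  If the principal downsets `↓w` and `↓v` are finite and
`f : ↓w ≃o ↓v` is an order-isomorphism, then the relation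
`E := {(x,y) : (x ∈ ↓w ∧ f x = y) ∨ (y ∈ ↓w ∧ f y = x)} ∪ Id` is a bi-bisimulation
equivalence on `X`. -/
theorem orderIso_biBisim
    {X : Type*} [TopologicalSpace X] [PartialOrder X] [CompactSpace X]
    (hclo : ∀ U : Set X, IsClopen U → IsClopen (upClo U) ∧ IsClopen (downClo U))
    (hpsa : ∀ x y : X, ¬ x ≤ y → ∃ U : Set X, IsClopen U ∧ IsUpperSet U ∧ x ∈ U ∧ y ∉ U)
    (hchain : ∀ x : X, IsChain (· ≤ ·) (Set.Ici x))
    (w v : X) (hwv : w ≠ v)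
    (u : X) (hwu : w ⋖ u) (hvu : v ⋖ u)
    (hfinw : (Set.Iic w).Finite) (hfinv : (Set.Iic v).Finite)
    (f : Set.Iic w ≃o Set.Iic v) :
    let E : X → X → Prop := fun x y =>
      (∃ hx : x ∈ Set.Iic w, (↑(f ⟨x, hx⟩) : X) = y) ∨
      (∃ hy : y ∈ Set.Iic w, (↑(f ⟨y, hy⟩) : X) = x) ∨ x = y
    Equivalence E ∧
    (∀ a a' b' : X, E a a' → a' ≤ b' → ∃ b, E b b' ∧ a ≤ b) ∧
    (∀ a a' c' : X, E a a' → c' ≤ a' → ∃ c, E c c' ∧ c ≤ a) ∧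
    (∀ a b : X, ¬ E a b → ∃ U : Set X, IsClopen U ∧ IsUpperSet U ∧
        {x | ∃ t ∈ U, E t x} = U ∧ Xor' (a ∈ U) (b ∈ U)) := by
  intro E
  have hcov : ∀ x y : X, x ≠ y → x ⋖ u → y ⋖ u → ¬ x ≤ y := fun x y hne hx hy hxy =>
    hx.2 (lt_of_le_of_ne hxy hne) hy.1
  have hdisj : ∀ z, z ≤ w → z ≤ v → False := by
    intro z hzw hzv
    rcases hchain z hzw hzv hwv with h | h
    · exact hcov w v hwv hwu hvu h
    · exact hcov v w hwv.symm hvu hwu h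
  have habove : ∀ p z b : X, p ⋖ u → z ≤ p → z ≤ b → b ≤ p ∨ u ≤ b := by
    intro p z b hp hzp hzb
    rcases (hchain z).total hzp hzb with h | h
    · rcases h.eq_or_lt with rfl | hlt
      · exact Or.inl le_rfl
      · rcases (hchain p).total hp.1.le h with h' | h'
        · exact Or.inr h'
        · rcases h'.eq_or_lt with rfl | hlt'
          · exact Or.inr le_rfl
          · exact (hp.2 hlt hlt').elim
    · exact Or.inl h
  have hfv : ∀ z : Set.Iic w, (f z : X) ≤ v := fun z => (f z).2
  have hE : Equivalence E := by
    refine ⟨fun x => Or.inr (Or.inr rfl), ?_, ?_⟩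
    · rintro x y (h | h | h)
      · exact Or.inr (Or.inl h)
      · exact Or.inl h
      · exact Or.inr (Or.inr h.symm)
    · rintro x y z (⟨hx, rfl⟩ | ⟨hy, rfl⟩ | rfl) h2
      · rcases h2 with ⟨hy, -⟩ | ⟨hz, h⟩ | rfl
        · exact (hdisj _ hy (hfv _)).elim
        · have := f.injective (Subtype.ext h)
          exact Or.inr (Or.inr (congrArg Subtype.val this).symm)
        · exact Or.inl ⟨hx, rfl⟩
      · rcases h2 with ⟨hy', rfl⟩ | ⟨hz, rfl⟩ | rfl
        · exact Or.inr (Or.inr rfl)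
        · exact (hdisj _ hy (hfv _)).elim
        · exact Or.inr (Or.inl ⟨hy, rfl⟩)
      · exact h2
  have hup : ∀ a a' b' : X, E a a' → a' ≤ b' → ∃ b, E b b' ∧ a ≤ b := by
    rintro a a' b' (⟨ha, rfl⟩ | ⟨ha, rfl⟩ | rfl) hb
    · rcases habove v _ b' hvu (hfv _) hb with h | h
      · refine ⟨f.symm ⟨b', h⟩, Or.inl ⟨(f.symm ⟨b', h⟩).2, by simp⟩, ?_⟩
        have : (⟨a, ha⟩ : Set.Iic w) ≤ f.symm ⟨b', h⟩ := f.le_symm_apply.2 hb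
        exact this
      · exact ⟨b', hE.refl b', (show a ≤ w from ha).trans (hwu.1.le.trans h)⟩
    · rcases habove w _ b' hwu ha hb with h | h
      · refine ⟨f ⟨b', h⟩, Or.inr (Or.inl ⟨h, rfl⟩), ?_⟩
        have : f ⟨a', ha⟩ ≤ f ⟨b', h⟩ := f.monotone hb
        exact this
      · exact ⟨b', hE.refl b', (hfv _).trans (hvu.1.le.trans h)⟩
    · exact ⟨b', hE.refl b', hb⟩
  have hdown : ∀ a a' c' : X, E a a' → c' ≤ a' → ∃ c, E c c' ∧ c ≤ a := by
    rintro a a' c' (⟨ha, rfl⟩ | ⟨ha, rfl⟩ | rfl) hc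
    · have h : c' ≤ v := hc.trans (hfv _)
      refine ⟨f.symm ⟨c', h⟩, Or.inl ⟨(f.symm ⟨c', h⟩).2, by simp⟩, ?_⟩
      have : f.symm ⟨c', h⟩ ≤ (⟨a, ha⟩ : Set.Iic w) := f.symm_apply_le.2 hc
      exact this
    · have h : c' ≤ w := hc.trans ha
      refine ⟨f ⟨c', h⟩, Or.inr (Or.inl ⟨h, rfl⟩), ?_⟩
      have : f ⟨c', h⟩ ≤ f ⟨a', ha⟩ := f.monotone hc
      exact this
    · exact ⟨c', hE.refl c', hc⟩
  have hanti : ∀ x y, E x y → x ≤ y → x = y := by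
    rintro x y (⟨hx, rfl⟩ | ⟨hy, rfl⟩ | rfl) hxy
    · exact (hdisj x hx (hxy.trans (hfv _))).elim
    · exact (hdisj _ (hxy.trans hy) (hfv _)).elim
    · rfl
  refine ⟨hE, hup, hdown, refined_of_finite hpsa hE hdown hanti (hfinw.union hfinv) ?_⟩
  rintro x y (⟨hx, rfl⟩ | ⟨hy, rfl⟩ | rfl)
  · exact Or.inr ⟨Or.inl hx, Or.inr (hfv _)⟩
  · exact Or.inr ⟨Or.inr (hfv _), Or.inl hy⟩
  · exact Or.inl rfl
end

section
/- Let n ≥ 1 and equip the n-comb C_n with the discrete topology. Let U := {x_1} ∪ ↑{x_i' : i is even}. Then every bi-bisimulation equivalence E on C_n that relates two distinct points must relate some point belonging to U to some point not belonging to U. (This is the key step showing that the dual bi-Heyting algebra of C_n is generated by a single element.) -/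
namespace Comb

variable {n : ℕ}

/-- The set `U = {x_1} ∪ ↑{x'_i : i even}`, with subscripts shifted down by one as in `Comb`. -/
def color (hn : 0 < n) : Set (Comb n) :=
  insert (Sum.inl (⟨0, hn⟩ : Fin n))
    (upClo {p : Comb n | ∃ i : Fin n, (i.val + 1) % 2 = 0 ∧ p = Sum.inr i})

theorem spine_mem_color (hn : 0 < n) (i : Fin n) : (Sum.inl i : Comb n) ∈ color hn := by
  by_cases h : i.val = 0
  · left
    have : i = ⟨0, hn⟩ := Fin.ext h
    rw [this]
  · right
    -- Every spine point other than the lowest one lies above the second tooth.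
    have h1 : 1 < n := by omega
    refine ⟨Sum.inr ⟨1, h1⟩, ⟨⟨1, h1⟩, by norm_num, rfl⟩, ?_⟩
    change (⟨1, h1⟩ : Fin n) ≤ i
    rw [Fin.le_def]
    change 1 ≤ i.val
    omega

theorem tooth_mem_color (hn : 0 < n) (i : Fin n) :
    (Sum.inr i : Comb n) ∈ color hn ↔ (i.val + 1) % 2 = 0 := by
  constructor
  · rintro (h | ⟨s, ⟨j, hj, rfl⟩, hs⟩)
    · cases h
    · have hji : j = i := hs
      rwa [← hji]
  · intro h
    exact Or.inr ⟨Sum.inr i, ⟨i, h, rfl⟩, le_rfl⟩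

section

variable {hn : 0 < n} {E : Comb n → Comb n → Prop}

theorem not_tooth_spine (hEquiv : Equivalence E)
    (hdown : ∀ w w' u' : Comb n, E w w' → u' ≤ w' → ∃ u, E u u' ∧ u ≤ w)
    (hmono : ∀ a b, a ∈ color hn → E a b → b ∈ color hn)
    (j i : Fin n) : ¬ E (Sum.inr j) (Sum.inl i) := by
  intro h
  obtain ⟨u, hu, huj⟩ := hdown _ _ (Sum.inr ⟨0, hn⟩) h (Nat.zero_le i.val)
  cases u with
  | inl k => exact (huj : False)
  | inr k =>
    obtain rfl : k = j := huj
    have h0 := hmono _ _ (spine_mem_color hn i) (hEquiv.trans (hEquiv.symm h) hu)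
    have h1 := (tooth_mem_color hn _).1 h0
    simp at h1

theorem spine_of_tooth (hEquiv : Equivalence E)
    (hup : ∀ w w' v' : Comb n, E w w' → w' ≤ v' → ∃ v, E v v' ∧ w ≤ v)
    (hdown : ∀ w w' u' : Comb n, E w w' → u' ≤ w' → ∃ u, E u u' ∧ u ≤ w)
    (hmono : ∀ a b, a ∈ color hn → E a b → b ∈ color hn)
    {i j : Fin n} (h : E (Sum.inr i) (Sum.inr j)) :
    ∃ k, j ≤ k ∧ E (Sum.inl i) (Sum.inl k) := by
  obtain ⟨v, hv, hjv⟩ := hup _ _ (Sum.inl i) (hEquiv.symm h) (le_refl i)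
  cases v with
  | inl k => exact ⟨k, hjv, hEquiv.symm hv⟩
  | inr k => exact (not_tooth_spine hEquiv hdown hmono k i hv).elim

theorem not_spine_spine (hEquiv : Equivalence E)
    (hup : ∀ w w' v' : Comb n, E w w' → w' ≤ v' → ∃ v, E v v' ∧ w ≤ v)
    (hdown : ∀ w w' u' : Comb n, E w w' → u' ≤ w' → ∃ u, E u u' ∧ u ≤ w)
    (hrefined : ∀ w v : Comb n, ¬ E w v → ∃ U : Set (Comb n),
        IsClopen U ∧ IsUpperSet U ∧ {x | ∃ u ∈ U, E u x} = U ∧ Xor' (w ∈ U) (v ∈ U))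
    (hmono : ∀ a b, a ∈ color hn → E a b → b ∈ color hn)
    (m : ℕ) : ∀ i k : Fin n, i.val = m → i < k → ¬ E (Sum.inl i) (Sum.inl k) := by
  induction m using Nat.strong_induction_on with
  | _ m ih =>
    rintro i k rfl hik h
    have hik' : i.val < k.val := hik
    have hi1 : i.val + 1 < n := by omega
    -- The class of `i` is order-convex, so it contains `i + 1`.
    have hsucc : E (Sum.inl i) (Sum.inl ⟨i.val + 1, hi1⟩) := by
      by_contra hne
      obtain ⟨V, -, hV, hsat, hx⟩ := hrefined _ _ hne
      rcases hx with ⟨h1, h2⟩ | ⟨h1, h2⟩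
      · exact h2 (hV (show i ≤ ⟨i.val + 1, hi1⟩ from Nat.le_succ i.val) h1)
      · have hk : (Sum.inl k : Comb n) ∈ V :=
          hV (show (⟨i.val + 1, hi1⟩ : Fin n) ≤ k from hik') h1
        apply h2
        rw [← hsat]
        exact ⟨_, hk, hEquiv.symm h⟩
    obtain ⟨u, hu, hui⟩ := hdown _ _ (Sum.inr ⟨i.val + 1, hi1⟩) hsucc
      (show (⟨i.val + 1, hi1⟩ : Fin n) ≤ ⟨i.val + 1, hi1⟩ from le_rfl)
    cases u with
    | inl l => exact not_tooth_spine hEquiv hdown hmono _ _ (hEquiv.symm hu)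
    | inr l =>
      have hli : l.val ≤ i.val := hui
      -- Adjacent teeth have different colors, so `l` is strictly below `i`.
      have hpar : (l.val + 1) % 2 = 0 ↔ (i.val + 1 + 1) % 2 = 0 := by
        rw [← tooth_mem_color hn l]
        refine Iff.trans ⟨fun hc => hmono _ _ hc hu, fun hc => hmono _ _ hc (hEquiv.symm hu)⟩
          (tooth_mem_color hn _)
      obtain ⟨k', hk', hE⟩ := spine_of_tooth hEquiv hup hdown hmono hu
      have hk'' : i.val + 1 ≤ k'.val := hk'
      exact ih l.val (by omega) l k' rfl (Fin.lt_def.2 (by omega)) hE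

end

end Comb

/-- Let `n ≥ 1` and equip the `n`-comb `C_n` with the discrete topology.
Let `U := {x_1} ∪ ↑{x'_i : i even}` (here `Sum.inl ⟨0,_⟩` is `x_1` and `Sum.inr i` is
`x'_{i+1}`, so the even-subscript teeth are those `Sum.inr i` with `(i+1) % 2 = 0`).
Then every bi-bisimulation equivalence `E` on `C_n` relating two distinct points must
relate some point of `U` to some point outside `U`. -/
theorem comb_biBisim_identifies_colors
    (n : ℕ) (hn : 0 < n)
    (E : Comb n → Comb n → Prop)
    (hEquiv : Equivalence E)
    (hup : ∀ w w' v' : Comb n, E w w' → w' ≤ v' → ∃ v, E v v' ∧ w ≤ v)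
    (hdown : ∀ w w' u' : Comb n, E w w' → u' ≤ w' → ∃ u, E u u' ∧ u ≤ w)
    (hrefined : ∀ w v : Comb n, ¬ E w v → ∃ U : Set (Comb n),
        IsClopen U ∧ IsUpperSet U ∧ {x | ∃ u ∈ U, E u x} = U ∧ Xor' (w ∈ U) (v ∈ U))
    (hproper : ∃ a b : Comb n, a ≠ b ∧ E a b) :
    ∃ a b : Comb n,
      a ∈ insert (Sum.inl (⟨0, hn⟩ : Fin n))
          (upClo {p : Comb n | ∃ i : Fin n, (i.val + 1) % 2 = 0 ∧ p = Sum.inr i}) ∧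
      b ∉ insert (Sum.inl (⟨0, hn⟩ : Fin n))
          (upClo {p : Comb n | ∃ i : Fin n, (i.val + 1) % 2 = 0 ∧ p = Sum.inr i}) ∧
      E a b := by
  by_contra hcon
  have hmono : ∀ a b, a ∈ Comb.color hn → E a b → b ∈ Comb.color hn := by
    intro a b ha hab
    by_contra hb
    exact hcon ⟨a, b, ha, hb, hab⟩
  have hspine : ∀ i k : Fin n, i < k → ¬ E (Sum.inl i) (Sum.inl k) := fun i k =>
    Comb.not_spine_spine hEquiv hup hdown hrefined hmono i.val i k rfl
  have htooth : ∀ i j : Fin n, i < j → ¬ E (Sum.inr i) (Sum.inr j) := fun i j hij h => by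
    obtain ⟨k, hk, hE⟩ := Comb.spine_of_tooth hEquiv hup hdown hmono h
    exact hspine i k (lt_of_lt_of_le hij hk) hE
  obtain ⟨a, b, hne, hab⟩ := hproper
  rcases a with i | i <;> rcases b with j | j
  · rcases lt_trichotomy i j with h | h | h
    · exact hspine i j h hab
    · exact hne (congrArg Sum.inl h)
    · exact hspine j i h (hEquiv.symm hab)
  · exact Comb.not_tooth_spine hEquiv hdown hmono j i (hEquiv.symm hab)
  · exact Comb.not_tooth_spine hEquiv hdown hmono i j hab
  · rcases lt_trichotomy i j with h | h | h
    · exact htooth i j h hab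
    · exact hne (congrArg Sum.inr h)
    · exact htooth j i h (hEquiv.symm hab)
end
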